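/- Suppose that X and Y are analytic metric spaces and φ : X → Y is a Borel function that is not Baire class one. Then there exist a function φ_ℕ^ℕ among the three functions 𝕔_{ℕ^ℕ}, ι_{ℕ^ℕ, ℕ^ℕ}, ι_{ℕ^ℕ, ℕ^ℕ_*}, and a function φ_* among the eight functions 𝕔_{ℕ^ℕ_* ∖ ℕ^ℕ}, ι_{ℕ^ℕ_* ∖ ℕ^ℕ, ℕ^ℕ_* ∖ ℕ^ℕ}, ι_{ℕ^ℕ_* ∖ ℕ^ℕ, ℕ^ℕ_*}, and ι_{ℕ^{<ℕ}, Z} ∘ p for Z among the discrete space ℕ^{<ℕ}, the one-point compactification ℕ^{<ℕ} ∪ {∞} of the discrete space ℕ^{<ℕ}, the subspace ℕ^{≤ℕ}_* ∖ ℕ^ℕ, the subspace ℕ^{≤ℕ} = ℕ^{<ℕ} ∪ ℕ^ℕ of ℕ^{≤ℕ}_*, and ℕ^{≤ℕ}_*, such that there is a closed continuous embedding into φ of the function φ_ℕ^ℕ ⊔ φ_* defined on ℕ^ℕ_* (agreeing with φ_ℕ^ℕ on ℕ^ℕ and with φ_* on ℕ^ℕ_* ∖ ℕ^ℕ, taking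 values in the topological disjoint union of the two codomains). -/

import Mathlib

open Set Topology TopologicalSpace
open scoped ENNReal

/-- `t` is an initial segment of `b : ℕ → ℕ`. -/
def PrefixFun (t : List ℕ) (b : ℕ → ℕ) : Prop :=
  ∀ (i : ℕ) (h : i < t.length), t.get ⟨i, h⟩ = b i

/-- The meet `s ∧ t`: the longest common initial segment of two finite sequences. -/
def listMeet : List ℕ → List ℕ → List ℕ
  | a :: s, b :: t => if a = b then a :: listMeet s t else []
  | _, _ => []

/-- A `∧`-embedding: an injection preserving meets. -/
def MeetEmbedding (π : List ℕ → List ℕ) : Prop :=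
  Function.Injective π ∧ ∀ s t, π (listMeet s t) = listMeet (π s) (π t)

/-- The induced map on Baire space: `limSeq π b = ⋃ i, π (b ↾ i)`. -/
def limSeq (π : List ℕ → List ℕ) (b : ℕ → ℕ) : ℕ → ℕ := fun n =>
  (π (List.ofFn fun i : Fin (n + 1) => b i)).getD n 0

/-- Points of the space `ℕ^{≤ℕ}_*`: finite sequences, infinite sequences, and
finite sequences followed by `∞`. -/
inductive NStar : Type
  | fin : List ℕ → NStar
  | inf : (ℕ → ℕ) → NStar
  | lim : List ℕ → NStar

namespace NStar

/-- `t ⊑ c`. -/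
def PrefixOf (t : List ℕ) : NStar → Prop
  | fin s => t <+: s
  | inf b => PrefixFun t b
  | lim s => t <+: s

/-- The basic "cylinder" `N_t = {c | t ⊑ c}`. -/
def cyl (t : List ℕ) : Set NStar := {c | PrefixOf t c}

/-- The smallest topology in which every `{t}` and every `N_t` is clopen. -/
instance : TopologicalSpace NStar :=
  TopologicalSpace.generateFrom
    {S | ∃ t : List ℕ, S = {fin t} ∨ S = ({fin t} : Set NStar)ᶜ ∨ S = cyl t ∨ S = (cyl t)ᶜ}

def IsFin (c : NStar) : Prop := ∃ t, c = fin t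
def IsInf (c : NStar) : Prop := ∃ b, c = inf b
def IsLim (c : NStar) : Prop := ∃ t, c = lim t

/-- The extension of `π : ℕ^{<ℕ} → ℕ^{<ℕ}` to `ℕ^{≤ℕ}_*`. -/
def hat (π : List ℕ → List ℕ) : NStar → NStar
  | fin t => fin (π t)
  | inf b => inf (limSeq π b)
  | lim t => lim (π t)

end NStar

/-- `ℕ^ℕ_* = ℕ^{≤ℕ}_* ∖ ℕ^{<ℕ}`. -/
abbrev NNStar : Type := {c : NStar // ¬ c.IsFin}
/-- `ℕ^ℕ_* ∖ ℕ^ℕ = {t⌢⟨∞⟩ : t ∈ ℕ^{<ℕ}}`. -/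
abbrev NLim : Type := {c : NStar // c.IsLim}
/-- The copy of `ℕ^{<ℕ}` inside `ℕ^{≤ℕ}_*` (a discrete subspace). -/
abbrev NFin : Type := {c : NStar // c.IsFin}
/-- `ℕ^{≤ℕ} = ℕ^{<ℕ} ∪ ℕ^ℕ`. -/
abbrev NFinInf : Type := {c : NStar // ¬ c.IsLim}
/-- `ℕ^{≤ℕ}_* ∖ ℕ^ℕ`. -/
abbrev NFinLim : Type := {c : NStar // ¬ c.IsInf}

def infPt (b : ℕ → ℕ) : NNStar :=
  ⟨NStar.inf b, by rintro ⟨t, h⟩; exact NStar.noConfusion h⟩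

def limPt (t : List ℕ) : NLim := ⟨NStar.lim t, t, rfl⟩

def finPt (t : List ℕ) : NFin := ⟨NStar.fin t, t, rfl⟩

/-- The extension `π̂` restricted to `ℕ^ℕ_*`. -/
def hatNN (π : List ℕ → List ℕ) (c : NNStar) : NNStar :=
  ⟨c.1.hat π, by
    obtain ⟨c, hc⟩ := c
    cases c with
    | fin t => exact fun _ => hc ⟨t, rfl⟩
    | inf b => rintro ⟨t, h⟩; exact NStar.noConfusion h
    | lim t => rintro ⟨s, h⟩; exact NStar.noConfusion h⟩

/-- The extension `π̂` restricted to `ℕ^ℕ_* ∖ ℕ^ℕ`. -/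
def hatLim (π : List ℕ → List ℕ) (c : NLim) : NLim :=
  ⟨c.1.hat π, by obtain ⟨c, t, rfl⟩ := c; exact ⟨π t, rfl⟩⟩

def NLim.toNN (c : NLim) : NNStar :=
  ⟨c.1, by obtain ⟨c, t, rfl⟩ := c; rintro ⟨s, h⟩; exact NStar.noConfusion h⟩

def NLim.base (c : NLim) : List ℕ :=
  match c.1 with
  | .lim t => t
  | .fin t => t
  | .inf _ => []

/-- The map `p : t⌢⟨∞⟩ ↦ t`, with values in the discrete copy of `ℕ^{<ℕ}`. -/
def pFin (c : NLim) : NFin := finPt c.base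

def NFin.toFinLim (c : NFin) : NFinLim :=
  ⟨c.1, by obtain ⟨c, t, rfl⟩ := c; rintro ⟨b, h⟩; exact NStar.noConfusion h⟩

def NFin.toFinInf (c : NFin) : NFinInf :=
  ⟨c.1, by obtain ⟨c, t, rfl⟩ := c; rintro ⟨s, h⟩; exact NStar.noConfusion h⟩

/-- A closed continuous embedding of `φ` into `φ'`: a pair of injective continuous closed
maps `πX : X → X'` and `πY : cl(φ[X]) → cl(φ'[X'])` with `φ' ∘ πX = πY ∘ φ`. -/
def ClosedContinuousEmbedding {X Y X' Y' : Type*} [TopologicalSpace X] [TopologicalSpace Y]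
    [TopologicalSpace X'] [TopologicalSpace Y'] (φ : X → Y) (φ' : X' → Y') : Prop :=
  ∃ (πX : X → X') (πY : closure (Set.range φ) → closure (Set.range φ')),
    Continuous πX ∧ Function.Injective πX ∧ IsClosedMap πX ∧
    Continuous πY ∧ Function.Injective πY ∧ IsClosedMap πY ∧
    ∀ x : X, φ' (πX x) = (πY ⟨φ x, subset_closure ⟨x, rfl⟩⟩ : Y')

/-- A topological space is analytic if it is a continuous image of a closed subset of `ℕ^ℕ`. -/
def IsAnalytic (X : Type*) [TopologicalSpace X] : Prop :=
  ∃ C : Set (ℕ → ℕ), IsClosed C ∧ ∃ f : C → X, Continuous f ∧ Function.Surjective f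

/-- Baire measurable: preimages of open sets have the Baire property. -/
def BaireMeasurableFun {X Y : Type*} [TopologicalSpace X] [TopologicalSpace Y]
    (φ : X → Y) : Prop :=
  ∀ V : Set Y, IsOpen V → ∃ U : Set X, IsOpen U ∧ IsMeagre (symmDiff (φ ⁻¹' V) U)

/-- Baire class one: preimages of open sets are `Fσ`. -/
def BaireClassOneFun {X Y : Type*} [TopologicalSpace X] [TopologicalSpace Y]
    (φ : X → Y) : Prop :=
  ∀ V : Set Y, IsOpen V → ∃ F : ℕ → Set X, (∀ n, IsClosed (F n)) ∧ φ ⁻¹' V = ⋃ n, F n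

/-- σ-continuous with closed witnesses. -/
def SigmaContClosed {X Y : Type*} [TopologicalSpace X] [TopologicalSpace Y]
    (φ : X → Y) : Prop :=
  ∃ F : ℕ → Set X, (∀ n, IsClosed (F n)) ∧ (⋃ n, F n) = Set.univ ∧ ∀ n, ContinuousOn φ (F n)

/-- Borel: preimages of open sets are Borel. -/
def BorelFun {X Y : Type*} [TopologicalSpace X] [TopologicalSpace Y] (φ : X → Y) : Prop :=
  ∀ V : Set Y, IsOpen V → @MeasurableSet X (borel X) (φ ⁻¹' V)

/-- The function on `ℕ^ℕ_*` agreeing with `f` on `ℕ^ℕ` and with `g` on `ℕ^ℕ_* ∖ ℕ^ℕ`,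
with values in the topological disjoint union. -/
def combine2 {A B : Type*} (f : (ℕ → ℕ) → A) (g : NLim → B) : NNStar → A ⊕ B := fun c =>
  match c with
  | ⟨.fin t, h⟩ => absurd ⟨t, rfl⟩ h
  | ⟨.inf b, _⟩ => Sum.inl (f b)
  | ⟨.lim t, _⟩ => Sum.inr (g (limPt t))

/-- The constant function `𝕔` on `ℕ^ℕ`, with values in the one-point space. -/
def f1 : (ℕ → ℕ) → PUnit := fun _ => PUnit.unit
/-- The identity of `ℕ^ℕ`. -/
def f2 : (ℕ → ℕ) → ℕ → ℕ := id
/-- The inclusion of `ℕ^ℕ` into `ℕ^ℕ_*`. -/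
def f3 : (ℕ → ℕ) → NNStar := infPt

/-- The constant function `𝕔` on `ℕ^ℕ_* ∖ ℕ^ℕ`. -/
def g1 : NLim → PUnit := fun _ => PUnit.unit
/-- The identity of `ℕ^ℕ_* ∖ ℕ^ℕ`. -/
def g2 : NLim → NLim := id
/-- The inclusion of `ℕ^ℕ_* ∖ ℕ^ℕ` into `ℕ^ℕ_*`. -/
def g3 : NLim → NNStar := NLim.toNN
/-- `ι ∘ p` into the discrete space `ℕ^{<ℕ}`. -/
def g4 : NLim → NFin := pFin
/-- `ι ∘ p` into the one-point compactification of the discrete space `ℕ^{<ℕ}`. -/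
def g5 : NLim → OnePoint NFin := fun c => OnePoint.some (pFin c)
/-- `ι ∘ p` into `ℕ^{≤ℕ}_* ∖ ℕ^ℕ`. -/
def g6 : NLim → NFinLim := fun c => NFin.toFinLim (pFin c)
/-- `ι ∘ p` into `ℕ^{≤ℕ} = ℕ^{<ℕ} ∪ ℕ^ℕ`. -/
def g7 : NLim → NFinInf := fun c => NFin.toFinInf (pFin c)
/-- `ι ∘ p` into `ℕ^{≤ℕ}_*`. -/
def g8 : NLim → NStar := fun c => (pFin c).1

namespace BF
open Filter hiding lim

/-- restriction of `b` to the first `n` entries -/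
def rs (b : ℕ → ℕ) (n : ℕ) : List ℕ := (List.range n).map b

theorem rs_zero (b : ℕ → ℕ) : rs b 0 = [] := rfl

theorem rs_succ (b : ℕ → ℕ) (n : ℕ) : rs b (n+1) = rs b n ++ [b n] := by
  simp [rs, List.range_succ]

@[simp] theorem rs_len (b : ℕ → ℕ) (n : ℕ) : (rs b n).length = n := by simp [rs]

theorem rs_get (b : ℕ → ℕ) (n i : ℕ) (h : i < (rs b n).length) : (rs b n)[i] = b i := by
  simp [rs]

theorem prefixFun_iff {t : List ℕ} {b : ℕ → ℕ} : PrefixFun t b ↔ rs b t.length = t := by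
  constructor
  · intro h
    apply List.ext_getElem (by simp)
    intro i h1 h2
    rw [rs_get]
    exact (h i h2).symm
  · intro h i hi
    have := rs_get b t.length i (by simpa using hi)
    rw [← this]
    simp [h]

theorem prefixFun_rs (b : ℕ → ℕ) (n : ℕ) : PrefixFun (rs b n) b := by
  rw [prefixFun_iff, rs_len]

theorem rs_mono (b : ℕ → ℕ) {m n : ℕ} (h : m ≤ n) : rs b m <+: rs b n := by
  induction n, h using Nat.le_induction with
  | base => exact List.prefix_rfl
  | succ n _ ih => rw [rs_succ]; exact ih.trans (List.prefix_append _ _)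

theorem PrefixFun.mono {s t : List ℕ} {b : ℕ → ℕ} (h : s <+: t) (ht : PrefixFun t b) :
    PrefixFun s b := by
  intro i hi
  have := ht i (lt_of_lt_of_le hi h.length_le)
  rw [← this]
  simpa using h.getElem hi

theorem prefixFun_eq {b c : ℕ → ℕ} (h : ∀ n, ∃ t : List ℕ, n ≤ t.length ∧ PrefixFun t b ∧
    PrefixFun t c) : b = c := by
  funext i
  obtain ⟨t, h1, h2, h3⟩ := h (i+1)
  rw [← h2 i h1, ← h3 i h1]

theorem PrefixFun.total {s t : List ℕ} {b : ℕ → ℕ} (hs : PrefixFun s b) (ht : PrefixFun t b) :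
    s <+: t ∨ t <+: s := by
  rw [prefixFun_iff] at hs ht
  rw [← hs, ← ht]
  rcases le_total s.length t.length with h | h
  · exact Or.inl (rs_mono b h)
  · exact Or.inr (rs_mono b h)

theorem rs_prefix_of {t : List ℕ} {b : ℕ → ℕ} (h : PrefixFun t b) {n : ℕ} (hn : n ≤ t.length) :
    rs b n <+: t := by
  rw [prefixFun_iff] at h
  rw [← h]; exact rs_mono b hn

theorem prefix_rs_of {t : List ℕ} {b : ℕ → ℕ} (h : PrefixFun t b) {n : ℕ} (hn : t.length ≤ n) :
    t <+: rs b n := by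
  rw [prefixFun_iff] at h
  rw [← h]; exact rs_mono b hn

theorem exists_branch (P : List ℕ → Prop) (h0 : P []) (hs : ∀ t, P t → ∃ n, P (t ++ [n])) :
    ∃ b, ∀ n, P (rs b n) := by
  choose f hf using hs
  let g : ℕ → {t // P t} := fun n => Nat.rec ⟨[], h0⟩ (fun _ t => ⟨t.1 ++ [f t.1 t.2], hf t.1 t.2⟩) n
  have hg : ∀ n, (g (n+1)).1 = (g n).1 ++ [f (g n).1 (g n).2] := fun n => rfl
  refine ⟨fun n => f (g n).1 (g n).2, fun n => ?_⟩
  have : rs (fun n => f (g n).1 (g n).2) n = (g n).1 := by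
    induction n with
    | zero => rfl
    | succ n ih => rw [rs_succ, ih, hg]
  rw [this]; exact (g n).2

open NStar

theorem PrefixOf.mono {s t : List ℕ} {c : NStar} (h : s <+: t) (ht : PrefixOf t c) :
    PrefixOf s c := by
  cases c with
  | fin u => exact h.trans ht
  | lim u => exact h.trans ht
  | inf b => exact PrefixFun.mono h ht

theorem cyl_mono {s t : List ℕ} (h : s <+: t) : cyl t ⊆ cyl s := fun _ hc => PrefixOf.mono h hc

theorem PrefixOf.total {s t : List ℕ} {c : NStar} (hs : c ∈ cyl s) (ht : c ∈ cyl t) :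
    s <+: t ∨ t <+: s := by
  cases c with
  | fin u => exact List.prefix_or_prefix_of_prefix hs ht
  | lim u => exact List.prefix_or_prefix_of_prefix hs ht
  | inf b => exact PrefixFun.total hs ht

theorem mem_cyl_nil (c : NStar) : c ∈ cyl [] := by
  cases c with
  | fin u => exact List.nil_prefix
  | lim u => exact List.nil_prefix
  | inf b => intro i hi; simp at hi

theorem prefix_cases {t u : List ℕ} (h : t <+: u) : u = t ∨ ∃ n, t ++ [n] <+: u := by
  obtain ⟨v, rfl⟩ := h
  cases v with
  | nil => left; simp
  | cons n v => right; exact ⟨n, v, by simp⟩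

/-- replaces `fin t` by `lim t` -/
def rr : NStar → NStar
  | fin t => lim t
  | inf b => inf b
  | lim t => lim t

theorem cyl_cases' {t : List ℕ} {c : NStar} (h : c ∈ cyl t) :
    c = fin t ∨ c = lim t ∨ ∃ n, c ∈ cyl (t ++ [n]) := by
  cases c with
  | fin u =>
    rcases prefix_cases (h : t <+: u) with rfl | ⟨n, hn⟩
    · exact Or.inl rfl
    · exact Or.inr (Or.inr ⟨n, hn⟩)
  | lim u =>
    rcases prefix_cases (h : t <+: u) with rfl | ⟨n, hn⟩
    · exact Or.inr (Or.inl rfl)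
    · exact Or.inr (Or.inr ⟨n, hn⟩)
  | inf b =>
    refine Or.inr (Or.inr ⟨b t.length, ?_⟩)
    have := prefixFun_iff.1 (h : PrefixFun t b)
    change PrefixFun _ b
    rw [← this, rs_len, ← rs_succ]
    exact prefixFun_rs _ _

theorem cyl_cases {t : List ℕ} {c : NStar} (h : c ∈ cyl t) :
    rr c = lim t ∨ ∃ n, c ∈ cyl (t ++ [n]) := by
  rcases cyl_cases' h with rfl | rfl | h
  · exact Or.inl rfl
  · exact Or.inl rfl
  · exact Or.inr h

theorem snoc_not_prefix (t : List ℕ) (n : ℕ) : ¬ t ++ [n] <+: t := by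
  intro h; have := h.length_le; simp at this

theorem snoc_inj_prefix {t u : List ℕ} {m n : ℕ} (h1 : t ++ [m] <+: u) (h2 : t ++ [n] <+: u) :
    m = n := by
  obtain ⟨v, rfl⟩ := h1
  obtain ⟨w, hw⟩ := h2
  simp at hw
  exact hw.1.symm

theorem cyl_snoc_inj {t : List ℕ} {m n : ℕ} {c : NStar} (h1 : c ∈ cyl (t ++ [m]))
    (h2 : c ∈ cyl (t ++ [n])) : m = n := by
  rcases PrefixOf.total h1 h2 with h | h
  · exact snoc_inj_prefix h List.prefix_rfl
  · exact snoc_inj_prefix List.prefix_rfl h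

theorem eq_inf_of_mem {b : ℕ → ℕ} {c : NStar} (h : ∀ n, c ∈ cyl (rs b n)) : c = inf b := by
  cases c with
  | fin u => have := (h (u.length+1) : _ <+: u).length_le; simp at this
  | lim u => have := (h (u.length+1) : _ <+: u).length_le; simp at this
  | inf b' =>
    congr 1
    exact prefixFun_eq fun n => ⟨rs b n, by simp, h n, prefixFun_rs _ _⟩

theorem inf_mem_cyl (b : ℕ → ℕ) (n : ℕ) : inf b ∈ cyl (rs b n) := prefixFun_rs b n

theorem split_ne {c c' : NStar} (h : rr c ≠ rr c') :
    (∃ t m n, m ≠ n ∧ c ∈ cyl (t ++ [m]) ∧ c' ∈ cyl (t ++ [n])) ∨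
    (∃ t n, rr c = lim t ∧ c' ∈ cyl (t ++ [n])) ∨
    (∃ t n, rr c' = lim t ∧ c ∈ cyl (t ++ [n])) := by
  by_contra hcon
  push Not at hcon
  obtain ⟨h1, h2, h3⟩ := hcon
  obtain ⟨b, hb⟩ := exists_branch (fun t => c ∈ cyl t ∧ c' ∈ cyl t)
    ⟨mem_cyl_nil _, mem_cyl_nil _⟩ (by
      rintro t ⟨hc, hc'⟩
      rcases cyl_cases hc with e | ⟨n, hn⟩ <;> rcases cyl_cases hc' with e' | ⟨m, hm⟩
      · exact absurd (e.trans e'.symm) h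
      · exact absurd hm (h2 t m e)
      · exact absurd hn (h3 t n e')
      · by_cases hmn : n = m
        · subst hmn; exact ⟨n, hn, hm⟩
        · exact absurd hm (h1 t n m hmn hn))
  apply h
  rw [eq_inf_of_mem (fun n => (hb n).1), eq_inf_of_mem (fun n => (hb n).2)]

/-! topology -/

theorem isOpen_cyl (t : List ℕ) : IsOpen (cyl t) :=
  isOpen_generateFrom_of_mem ⟨t, by simp⟩
theorem isOpen_cyl_compl (t : List ℕ) : IsOpen (cyl t)ᶜ :=
  isOpen_generateFrom_of_mem ⟨t, by simp⟩
theorem isOpen_fin (t : List ℕ) : IsOpen ({fin t} : Set NStar) :=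
  isOpen_generateFrom_of_mem ⟨t, by simp⟩
theorem isOpen_fin_compl (t : List ℕ) : IsOpen ({fin t} : Set NStar)ᶜ :=
  isOpen_generateFrom_of_mem ⟨t, by simp⟩

theorem isClopen_cyl (t : List ℕ) : IsClopen (cyl t) :=
  ⟨⟨isOpen_cyl_compl t⟩, isOpen_cyl t⟩
theorem isClopen_fin (t : List ℕ) : IsClopen ({fin t} : Set NStar) :=
  ⟨⟨isOpen_fin_compl t⟩, isOpen_fin t⟩

theorem open_inf {O : Set NStar} (hO : IsOpen O) (b : ℕ → ℕ) (h : inf b ∈ O) :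
    ∃ n, cyl (rs b n) ⊆ O := by
  induction hO with
  | basic s hs =>
    obtain ⟨t, rfl | rfl | rfl | rfl⟩ := hs
    · simp at h
    · refine ⟨t.length + 1, fun c hc => ?_⟩
      rintro rfl
      have := (hc : _ <+: t).length_le
      simp at this
    · exact ⟨t.length, by rw [prefixFun_iff.1 (h : PrefixFun t b)]⟩
    · refine ⟨t.length, fun c hc hct => h ?_⟩
      have : rs b t.length = t := by
        rcases PrefixOf.total hc hct with h | h
        · exact h.eq_of_length (by simp)
        · exact (h.eq_of_length (by simp)).symm
      exact prefixFun_iff.2 this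
  | univ => exact ⟨0, subset_univ _⟩
  | inter s t _ _ ih1 ih2 =>
    obtain ⟨m, hm⟩ := ih1 h.1
    obtain ⟨n, hn⟩ := ih2 h.2
    exact ⟨max m n, fun c hc => ⟨hm (cyl_mono (rs_mono b (le_max_left _ _)) hc),
      hn (cyl_mono (rs_mono b (le_max_right _ _)) hc)⟩⟩
  | sUnion S _ ih =>
    obtain ⟨s, hs, hbs⟩ := h
    obtain ⟨n, hn⟩ := ih s hs hbs
    exact ⟨n, hn.trans (subset_sUnion_of_mem hs)⟩

theorem finite_snoc (s t : List ℕ) : {n | s ++ [n] <+: t}.Finite :=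
  Set.Subsingleton.finite fun _ hm _ hn => snoc_inj_prefix hm hn

theorem open_lim {O : Set NStar} (hO : IsOpen O) (s : List ℕ) (h : lim s ∈ O) :
    ∀ᶠ n in cofinite, cyl (s ++ [n]) ⊆ O := by
  induction hO with
  | basic u hu =>
    obtain ⟨t, rfl | rfl | rfl | rfl⟩ := hu
    · simp at h
    · refine (finite_snoc s t).subset fun n hn => ?_
      by_contra hcon
      apply hn
      rintro c hc rfl
      exact hcon hc
    · refine Filter.Eventually.of_forall fun n => cyl_mono ?_
      exact (h : t <+: s).trans (List.prefix_append _ _)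
    · refine (finite_snoc s t).subset fun n hn => ?_
      by_contra hcon
      apply hn
      intro c hc hct
      rcases PrefixOf.total hc hct with h' | h'
      · exact hcon h'
      · rcases List.prefix_concat_iff.1 h' with rfl | h'
        · exact hcon List.prefix_rfl
        · exact h h'
  | univ => exact Filter.Eventually.of_forall fun n => subset_univ _
  | inter s t _ _ ih1 ih2 =>
    filter_upwards [ih1 h.1, ih2 h.2] with n h1 h2 using subset_inter h1 h2
  | sUnion S _ ih =>
    obtain ⟨s, hs, hbs⟩ := h
    filter_upwards [ih s hs hbs] with n hn using hn.trans (subset_sUnion_of_mem hs)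

theorem nhds_inf {O : Set NStar} {b : ℕ → ℕ} (hO : O ∈ 𝓝 (inf b)) : ∃ n, cyl (rs b n) ⊆ O := by
  obtain ⟨V, hV, hVo, hb⟩ := mem_nhds_iff.1 hO
  obtain ⟨n, hn⟩ := open_inf hVo b hb
  exact ⟨n, hn.trans hV⟩

theorem nhds_lim {O : Set NStar} {t : List ℕ} (hO : O ∈ 𝓝 (lim t)) :
    ∀ᶠ n in cofinite, cyl (t ++ [n]) ⊆ O := by
  obtain ⟨V, hV, hVo, hb⟩ := mem_nhds_iff.1 hO
  filter_upwards [open_lim hVo t hb] with n hn using hn.trans hV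

theorem mem_nhds_inf {O : Set NStar} {b : ℕ → ℕ} {n : ℕ} (h : cyl (rs b n) ⊆ O) :
    O ∈ 𝓝 (inf b) :=
  mem_of_superset ((isOpen_cyl _).mem_nhds (inf_mem_cyl b n)) h

theorem lim_notMem_snoc (t : List ℕ) (n : ℕ) : lim t ∉ cyl (t ++ [n]) := snoc_not_prefix t n
theorem fin_notMem_snoc (t : List ℕ) (n : ℕ) : fin t ∉ cyl (t ++ [n]) := snoc_not_prefix t n

theorem mem_nhds_lim {O : Set NStar} {t : List ℕ} (h0 : lim t ∈ O)
    (h : ∀ᶠ n in cofinite, cyl (t ++ [n]) ⊆ O) : O ∈ 𝓝 (lim t) := by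
  have hfin : {n | ¬ cyl (t ++ [n]) ⊆ O}.Finite := h
  have hop : IsOpen ((cyl t \ {fin t}) ∩ ⋂ n ∈ {n | ¬ cyl (t ++ [n]) ⊆ O}, (cyl (t ++ [n]))ᶜ) :=
    ((isOpen_cyl t).inter (isOpen_fin_compl t)).inter
      (hfin.isOpen_biInter fun n _ => isOpen_cyl_compl _)
  refine mem_of_superset (hop.mem_nhds ?_) ?_
  · refine ⟨⟨(List.prefix_rfl : t <+: t), by simp⟩, ?_⟩
    simp only [mem_iInter]
    intro n _
    exact lim_notMem_snoc t n
  · rintro c ⟨⟨h1, h2⟩, h3⟩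
    rcases cyl_cases' h1 with rfl | rfl | ⟨n, hn⟩
    · simp at h2
    · exact h0
    · by_contra hc
      simp only [mem_iInter] at h3
      exact h3 n (fun hh => hc (hh hn)) hn

instance : CompactSpace NStar := by
  refine ⟨isCompact_iff_ultrafilter_le_nhds.2 fun U _ => ?_⟩
  by_cases hcase : ∃ t, cyl t ∈ U ∧ ∀ n, cyl (t ++ [n]) ∉ U
  · obtain ⟨t, ht, hn⟩ := hcase
    by_cases hf : {fin t} ∈ U
    · refine ⟨fin t, mem_univ _, fun O hO => ?_⟩
      exact mem_of_superset hf (by simpa using mem_of_mem_nhds hO)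
    · refine ⟨lim t, mem_univ _, fun O hO => ?_⟩
      have hfin : {n | ¬ cyl (t ++ [n]) ⊆ O}.Finite := nhds_lim hO
      have h1 : (⋂ n ∈ {n | ¬ cyl (t ++ [n]) ⊆ O}, (cyl (t ++ [n]))ᶜ) ∈ U :=
        (biInter_mem hfin).2 fun n _ => Ultrafilter.compl_mem_iff_notMem.2 (hn n)
      have h2 : ({fin t} : Set NStar)ᶜ ∈ U := Ultrafilter.compl_mem_iff_notMem.2 hf
      filter_upwards [h1, h2, ht] with c h3 h2 h1
      rcases cyl_cases' h1 with rfl | rfl | ⟨n, hn⟩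
      · simp at h2
      · exact mem_of_mem_nhds hO
      · by_contra hc
        simp only [mem_iInter] at h3
        exact h3 n (fun hh => hc (hh hn)) hn
  · push Not at hcase
    obtain ⟨b, hb⟩ := exists_branch (fun t => cyl t ∈ U)
      (mem_of_superset univ_mem fun c _ => mem_cyl_nil c) hcase
    refine ⟨inf b, mem_univ _, fun O hO => ?_⟩
    obtain ⟨n, hn⟩ := nhds_inf hO
    exact mem_of_superset (hb n) hn

theorem exists_clopen_sep {c c' : NStar} (h : c ≠ c') :
    ∃ U : Set NStar, IsClopen U ∧ c ∈ U ∧ c' ∉ U := by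
  by_cases hr : rr c = rr c'
  · have : (∃ t, c = fin t) ∨ (∃ t, c' = fin t) := by
      cases c <;> cases c' <;> simp_all [rr]
    rcases this with ⟨t, rfl⟩ | ⟨t, rfl⟩
    · exact ⟨{fin t}, isClopen_fin t, rfl, fun h' => h h'.symm⟩
    · exact ⟨{fin t}ᶜ, (isClopen_fin t).compl, h, fun h' => h' rfl⟩
  · have key : ∀ {c c' : NStar} {t n}, rr c = lim t → c' ∈ cyl (t ++ [n]) → c ∉ cyl (t ++ [n]) := by
      intro c c' t n e _ hc
      cases c with
      | fin u => simp [rr] at e; subst e; exact fin_notMem_snoc _ _ hc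
      | lim u => simp [rr] at e; subst e; exact lim_notMem_snoc _ _ hc
      | inf b => simp [rr] at e
    rcases split_ne hr with ⟨t, m, n, hmn, h1, h2⟩ | ⟨t, n, e, h1⟩ | ⟨t, n, e, h1⟩
    · exact ⟨_, isClopen_cyl _, h1, fun h3 => hmn (cyl_snoc_inj h3 h2).symm.symm⟩
    · exact ⟨_, (isClopen_cyl (t ++ [n])).compl, key e h1, fun h => h h1⟩
    · exact ⟨_, isClopen_cyl (t ++ [n]), h1, key e h1⟩

instance : T2Space NStar := ⟨fun c c' h => by
  obtain ⟨U, hU, h1, h2⟩ := exists_clopen_sep h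
  exact ⟨U, Uᶜ, hU.isOpen, hU.compl.isOpen, h1, h2, disjoint_compl_right⟩⟩

instance : CompactSpace NNStar := by
  have : IsClosed {c : NStar | ¬ c.IsFin} := by
    have : {c : NStar | ¬ c.IsFin}ᶜ = ⋃ t, {fin t} := by
      ext c; simp [IsFin, eq_comm]
    rw [← isOpen_compl_iff, this]
    exact isOpen_iUnion isOpen_fin
  exact isCompact_iff_compactSpace.1 this.isCompact

end BF

namespace BF
open Filter hiding lim
open NStar

/-- glue three functions to a function on `NStar` -/
def glue {Z : Type*} (w x : List ℕ → Z) (z : (ℕ → ℕ) → Z) : NStar → Z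
  | fin t => w t
  | lim t => x t
  | inf b => z b

structure Scheme {Z : Type*} [TopologicalSpace Z] (F : List ℕ → Set Z) (w x : List ℕ → Z)
    (z : (ℕ → ℕ) → Z) : Prop where
  w_mem : ∀ t, w t ∈ F t
  x_mem : ∀ t, x t ∈ F t
  z_mem : ∀ b n, z b ∈ F (rs b n)
  anti : ∀ t n, F (t ++ [n]) ⊆ F t
  conv : ∀ t, ∀ O ∈ 𝓝 (x t), ∀ᶠ n in cofinite, F (t ++ [n]) ⊆ O
  br : ∀ b, ∀ O ∈ 𝓝 (z b), ∃ n, F (rs b n) ⊆ O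
  disj : ∀ t m n, m ≠ n → Disjoint (F (t ++ [m])) (F (t ++ [n]))
  x_not : ∀ t n, x t ∉ F (t ++ [n])
  w_not : ∀ t n, w t ∉ F (t ++ [n])

section
variable {Z : Type*} [TopologicalSpace Z] {F : List ℕ → Set Z} {w x : List ℕ → Z}
  {z : (ℕ → ℕ) → Z}

theorem anti_prefix (h : ∀ t n, F (t ++ [n]) ⊆ F t) {s t : List ℕ} (hst : s <+: t) :
    F t ⊆ F s := by
  obtain ⟨u, rfl⟩ := hst
  induction u using List.reverseRecOn with
  | nil => simp
  | append_singleton u n ih => rw [← List.append_assoc]; exact (h _ _).trans ih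

theorem Scheme.glue_mem (S : Scheme F w x z) {t : List ℕ} {c : NStar} (h : c ∈ cyl t) :
    glue w x z c ∈ F t := by
  cases c with
  | fin u => exact anti_prefix S.anti h (S.w_mem u)
  | lim u => exact anti_prefix S.anti h (S.x_mem u)
  | inf b =>
    have := S.z_mem b t.length
    rwa [prefixFun_iff.1 (h : PrefixFun t b)] at this

theorem Scheme.continuous (S : Scheme F w x z) : Continuous (glue w x z) := by
  rw [continuous_iff_continuousAt]
  intro c O hO
  rw [mem_map]
  cases c with
  | fin u =>
    exact mem_of_superset ((isOpen_fin u).mem_nhds rfl) (by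
      rintro c rfl; exact (mem_of_mem_nhds hO : glue w x z (fin u) ∈ O))
  | lim u =>
    apply mem_nhds_lim (mem_of_mem_nhds hO : glue w x z (lim u) ∈ O)
    filter_upwards [S.conv u O hO] with n hn c hc using hn (S.glue_mem hc)
  | inf b =>
    obtain ⟨n, hn⟩ := S.br b O hO
    exact mem_nhds_inf (n := n) fun c hc => hn (S.glue_mem hc)

theorem Scheme.inj (S : Scheme F w x z) {c c' : NStar} (h : glue w x z c = glue w x z c') :
    rr c = rr c' := by
  have key : ∀ {c c' : NStar} {t n}, rr c = lim t → c' ∈ cyl (t ++ [n]) →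
      glue w x z c ≠ glue w x z c' := by
    intro c c' t n e hc' heq
    have h1 := S.glue_mem hc'
    rw [← heq] at h1
    cases c with
    | fin u => simp [rr] at e; subst e; exact S.w_not _ _ h1
    | lim u => simp [rr] at e; subst e; exact S.x_not _ _ h1
    | inf b => simp [rr] at e
  by_contra hr
  rcases split_ne hr with ⟨t, m, n, hmn, h1, h2⟩ | ⟨t, n, e, h1⟩ | ⟨t, n, e, h1⟩
  · exact Set.disjoint_left.1 (S.disj t m n hmn) (S.glue_mem h1) (h ▸ S.glue_mem h2)
  · exact key e h1 h
  · exact key e h1 h.symm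
end

/-! growing maps and copies -/

def Grow (k : List ℕ → List ℕ) : Prop := ∀ t n, k t <+: k (t ++ [n]) ∧ (k t).length < (k (t ++ [n])).length

def Copy (k : List ℕ → List ℕ) : Prop :=
  ∀ t, ∃ m : ℕ → ℕ, Function.Injective m ∧ ∀ n, k t ++ [m n] <+: k (t ++ [n])

theorem Copy.grow {k : List ℕ → List ℕ} (h : Copy k) : Grow k := by
  intro t n
  obtain ⟨m, -, hm⟩ := h t
  refine ⟨(List.prefix_append _ _).trans (hm n), ?_⟩
  have := (hm n).length_le
  simp at this
  omega

def kinf (k : List ℕ → List ℕ) (b : ℕ → ℕ) : ℕ → ℕ := fun i => (k (rs b (i+1))).getD i 0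

theorem Grow.mono {k : List ℕ → List ℕ} (h : Grow k) {s t : List ℕ} (hst : s <+: t) :
    k s <+: k t := by
  obtain ⟨u, rfl⟩ := hst
  induction u using List.reverseRecOn with
  | nil => simp
  | append_singleton u n ih => rw [← List.append_assoc]; exact ih.trans (h _ _).1

theorem Grow.len {k : List ℕ → List ℕ} (h : Grow k) (b : ℕ → ℕ) (n : ℕ) :
    n ≤ (k (rs b n)).length := by
  induction n with
  | zero => simp
  | succ n ih => rw [rs_succ]; have := (h (rs b n) (b n)).2; omega

theorem Grow.kinf_prefix {k : List ℕ → List ℕ} (h : Grow k) (b : ℕ → ℕ) (n : ℕ) :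
    PrefixFun (k (rs b n)) (kinf k b) := by
  intro i hi
  have h1 : i < (k (rs b (i+1))).length := h.len b (i+1)
  have h2 : kinf k b i = (k (rs b (i+1)))[i] := by simp [kinf, h1]
  rw [h2]
  rcases le_total n (i+1) with hn | hn
  · simpa using (h.mono (rs_mono b hn)).getElem hi
  · simpa using ((h.mono (rs_mono b hn)).getElem h1).symm

theorem Copy.prefix_unique {k : List ℕ → List ℕ} (h : Copy k) {b c : ℕ → ℕ}
    (hc : ∀ n, PrefixFun (k (rs b n)) c) : c = kinf k b :=
  prefixFun_eq fun n => ⟨_, h.grow.len b n, hc n, h.grow.kinf_prefix b n⟩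

def hat (k : List ℕ → List ℕ) : NStar → NStar :=
  glue (fun t => fin (k t)) (fun t => lim (k t)) (fun b => inf (kinf k b))

theorem Copy.scheme {k : List ℕ → List ℕ} (h : Copy k) :
    Scheme (fun t => cyl (k t)) (fun t => fin (k t)) (fun t => lim (k t))
      (fun b => inf (kinf k b)) where
  w_mem t := (List.prefix_rfl : k t <+: k t)
  x_mem t := (List.prefix_rfl : k t <+: k t)
  z_mem b n := h.grow.kinf_prefix b n
  anti t n := cyl_mono (h.grow t n).1
  conv t O hO := by
    obtain ⟨m, hm, hp⟩ := h t
    have := hm.tendsto_cofinite.eventually (nhds_lim hO)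
    filter_upwards [this] with n hn using (cyl_mono (hp n)).trans hn
  br b O hO := by
    obtain ⟨n, hn⟩ := nhds_inf hO
    exact ⟨n, (cyl_mono (rs_prefix_of (h.grow.kinf_prefix b n) (h.grow.len b n))).trans hn⟩
  disj t i j hij := by
    obtain ⟨m, hm, hp⟩ := h t
    rw [Set.disjoint_left]
    intro c h1 h2
    exact hij (hm (cyl_snoc_inj (cyl_mono (hp i) h1) (cyl_mono (hp j) h2)))
  x_not t n hc := by
    have := (hc : k (t ++ [n]) <+: k t).length_le
    have := (h.grow t n).2
    omega
  w_not t n hc := by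
    have := (hc : k (t ++ [n]) <+: k t).length_le
    have := (h.grow t n).2
    omega

theorem Copy.continuous_hat {k : List ℕ → List ℕ} (h : Copy k) : Continuous (hat k) :=
  h.scheme.continuous

theorem Copy.hat_inj {k : List ℕ → List ℕ} (h : Copy k) : Function.Injective (hat k) := by
  intro c c' hcc
  have := h.scheme.inj hcc
  cases c <;> cases c' <;> simp_all [rr, hat, glue]

theorem Copy.inj {k : List ℕ → List ℕ} (h : Copy k) : Function.Injective k := by
  intro s t hst
  have : hat k (fin s) = hat k (fin t) := by simp [hat, glue, hst]
  simpa using h.hat_inj this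

theorem Copy.comp {k k' : List ℕ → List ℕ} (h : Copy k) (h' : Copy k') : Copy (k ∘ k') := by
  intro t
  obtain ⟨m', hm', hp'⟩ := h' t
  obtain ⟨m, hm, hp⟩ := h (k' t)
  exact ⟨m ∘ m', hm.comp hm', fun n => (hp (m' n)).trans (h.grow.mono (hp' n))⟩

theorem Copy.kinf_comp {k k' : List ℕ → List ℕ} (h : Copy k) (h' : Copy k') (b : ℕ → ℕ) :
    kinf (k ∘ k') b = kinf k (kinf k' b) := by
  symm
  apply (h.comp h').prefix_unique
  intro n
  have := h.grow.kinf_prefix (kinf k' b) (k' (rs b n)).length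
  rwa [prefixFun_iff.1 (h'.grow.kinf_prefix b n)] at this

/-! Baire space -/

def CylB (t : List ℕ) : Set (ℕ → ℕ) := {b | PrefixFun t b}

theorem isOpen_CylB (t : List ℕ) : IsOpen (CylB t) := by
  have : CylB t = ⋂ i : Fin t.length, {b : ℕ → ℕ | t.get i = b i} := by
    ext b; simp only [CylB, PrefixFun, mem_ofPred_eq, mem_iInter]
    exact ⟨fun h i => h i.1 i.2, fun h i hi => h ⟨i, hi⟩⟩
  rw [this]
  refine isOpen_iInter_of_finite fun i => ?_
  exact (isOpen_discrete {x : ℕ | t.get i = x}).preimage (continuous_apply (i : ℕ))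

theorem nhdsB {O : Set (ℕ → ℕ)} {b : ℕ → ℕ} (hO : O ∈ 𝓝 b) : ∃ n, CylB (rs b n) ⊆ O := by
  rw [nhds_pi, Filter.mem_pi] at hO
  obtain ⟨I, hI, V, hV, hs⟩ := hO
  obtain ⟨n, hn⟩ := hI.bddAbove
  refine ⟨n + 1, fun c hc => hs fun i hi => ?_⟩
  have hi' : i < n + 1 := Nat.lt_succ_of_le (hn hi)
  have := hc i (by simpa using hi')
  have h2 := rs_get b (n+1) i (by simpa using hi')
  have : c i = b i := by rw [← this, ← h2]; simp
  rw [this]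
  exact mem_of_mem_nhds (hV i)

theorem CylB_mono {s t : List ℕ} (h : s <+: t) : CylB t ⊆ CylB s := fun _ hb => PrefixFun.mono h hb

theorem mem_CylB_rs (b : ℕ → ℕ) (n : ℕ) : b ∈ CylB (rs b n) := prefixFun_rs b n

/-- extend by zeroes -/
def ext0 (t : List ℕ) : ℕ → ℕ := fun i => t.getD i 0

theorem ext0_mem (t : List ℕ) : ext0 t ∈ CylB t := by
  intro i hi; simp [ext0, hi]

theorem continuous_inf : Continuous NStar.inf := by
  rw [continuous_iff_continuousAt]
  intro b O hO
  obtain ⟨n, hn⟩ := nhds_inf hO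
  exact mem_of_superset ((isOpen_CylB (rs b n)).mem_nhds (mem_CylB_rs b n)) fun c hc => hn hc

theorem continuous_infPt : Continuous infPt := Continuous.subtype_mk continuous_inf _

theorem isEmbedding_inf : IsEmbedding NStar.inf := by
  refine ⟨⟨?_⟩, fun b c h => by simpa using h⟩
  rw [TopologicalSpace.ext_iff_nhds]
  intro b
  rw [nhds_induced]
  refine le_antisymm (continuous_inf.tendsto b).le_comap ?_
  intro O hO
  obtain ⟨n, hn⟩ := nhdsB hO
  exact ⟨cyl (rs b n), (isOpen_cyl _).mem_nhds (inf_mem_cyl b n), fun c hc => hn hc⟩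

theorem isEmbedding_infPt : IsEmbedding infPt :=
  IsEmbedding.of_comp continuous_infPt continuous_subtype_val isEmbedding_inf

theorem Copy.continuous_kinf {k : List ℕ → List ℕ} (h : Copy k) : Continuous (kinf k) := by
  rw [isEmbedding_inf.continuous_iff]
  exact h.continuous_hat.comp continuous_inf

/-! recursion on lists from the end -/

def trRev {α : Type*} (step : α → ℕ → ℕ → α) (a : α) : List ℕ → α
  | [] => a
  | n :: t => step (trRev step a t) t.length n

def tr {α : Type*} (step : α → ℕ → ℕ → α) (a : α) (t : List ℕ) : α := trRev step a t.reverse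

theorem tr_nil {α : Type*} (step : α → ℕ → ℕ → α) (a : α) : tr step a [] = a := rfl

theorem tr_snoc {α : Type*} (step : α → ℕ → ℕ → α) (a : α) (t : List ℕ) (n : ℕ) :
    tr step a (t ++ [n]) = step (tr step a t) t.length n := by
  simp [tr, trRev]

def DenseAbove (D : Set (List ℕ)) (s : List ℕ) : Prop := ∀ t, s <+: t → ∃ d ∈ D, t <+: d

theorem DenseAbove.mono {D : Set (List ℕ)} {s t : List ℕ} (h : DenseAbove D s) (hst : s <+: t) :
    DenseAbove D t := fun u hu => h u (hst.trans hu)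

theorem subcopy {D : Set (List ℕ)} {s : List ℕ} (hD : DenseAbove D s) {G : Set (ℕ → ℕ)}
    (hG : G ∈ residual (ℕ → ℕ)) :
    ∃ k, Copy k ∧ (∀ t, k t ∈ D ∧ s <+: k t) ∧ ∀ b, kinf k b ∈ G := by
  obtain ⟨S, hSo, hSd, hSc, hSG⟩ := mem_residual_iff.1 hG
  obtain ⟨O, hO⟩ := (hSc.insert univ).exists_eq_range (insert_nonempty _ _)
  have hOo : ∀ j, IsOpen (O j) ∧ Dense (O j) := by
    intro j
    have : O j ∈ insert univ S := hO ▸ mem_range_self j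
    rcases this with h | h
    · rw [h]; exact ⟨isOpen_univ, dense_univ⟩
    · exact ⟨hSo _ h, hSd _ h⟩
  have hOG : (⋂ j, O j) ⊆ G := by
    refine Subset.trans ?_ hSG
    intro b hb U hU
    have : U ∈ range O := hO ▸ mem_insert_of_mem _ hU
    obtain ⟨j, rfl⟩ := this
    exact mem_iInter.1 hb j
  have he : ∀ (u : List ℕ) (j : ℕ), ∃ u', u <+: u' ∧ CylB u' ⊆ O j := by
    intro u j
    obtain ⟨b, hb, hbO⟩ := (hOo j).2.inter_open_nonempty _ (isOpen_CylB u) ⟨_, ext0_mem u⟩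
    obtain ⟨n, hn⟩ := nhdsB ((hOo j).1.mem_nhds hbO)
    refine ⟨rs b (max n u.length), prefix_rs_of hb (le_max_right _ _),
      (CylB_mono (rs_mono b (le_max_left _ _))).trans hn⟩
  choose e he1 he2 using he
  choose! d hd1 hd2 using hD
  let k : List ℕ → List ℕ := tr (fun u j n => d (e (u ++ [n]) j)) (d s)
  have hk0 : k [] = d s := rfl
  have hks : ∀ t n, k (t ++ [n]) = d (e (k t ++ [n]) t.length) := fun t n => tr_snoc _ _ t n
  have hk : ∀ t, k t ∈ D ∧ s <+: k t := by
    intro t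
    induction t using List.reverseRecOn with
    | nil => exact ⟨hd1 _ List.prefix_rfl, hd2 _ List.prefix_rfl⟩
    | append_singleton t n ih =>
      rw [hks]
      have : s <+: e (k t ++ [n]) t.length :=
        (ih.2.trans (List.prefix_append _ _)).trans (he1 _ _)
      exact ⟨hd1 _ this, this.trans (hd2 _ this)⟩
  have hpre : ∀ t n, e (k t ++ [n]) t.length <+: k (t ++ [n]) := by
    intro t n
    rw [hks]
    exact hd2 _ (((hk t).2.trans (List.prefix_append _ _)).trans (he1 _ _))
  have hc : Copy k := fun t => ⟨id, Function.injective_id, fun n => (he1 _ _).trans (hpre t n)⟩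
  refine ⟨k, hc, hk, fun b => hOG (mem_iInter.2 fun j => ?_)⟩
  have h1 := hc.grow.kinf_prefix b (j+1)
  rw [rs_succ] at h1
  have h2 := PrefixFun.mono (hpre (rs b j) (b j)) h1
  rw [rs_len] at h2
  exact he2 _ _ h2

theorem dich_list (E : Set (List ℕ)) : ∃ k, Copy k ∧ ((∀ t, k t ∈ E) ∨ (∀ t, k t ∉ E)) := by
  by_cases h : DenseAbove E []
  · obtain ⟨k, h1, h2, -⟩ := subcopy h univ_mem
    exact ⟨k, h1, Or.inl fun t => (h2 t).1⟩
  · unfold DenseAbove at h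
    push Not at h
    obtain ⟨s, -, hs⟩ := h
    have : DenseAbove Eᶜ s := fun t ht => ⟨t, fun h => hs t h ht, List.prefix_rfl⟩
    obtain ⟨k, h1, h2, -⟩ := subcopy this univ_mem
    exact ⟨k, h1, Or.inr fun t => (h2 t).1⟩

end BF

namespace BF
open Filter hiding lim
open NStar

theorem thin {Z : Type*} [TopologicalSpace Z] {A : ℕ → Set Z} {x : Z} (hc : ∀ n, IsClosed (A n))
    (hx : ∀ n, x ∉ A n) (hl : ∀ O ∈ 𝓝 x, ∀ᶠ n in atTop, A n ⊆ O) :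
    ∃ g : ℕ → ℕ, StrictMono g ∧ ∀ m n, m ≠ n → Disjoint (A (g m)) (A (g n)) := by
  obtain ⟨g, -, hg⟩ := exists_seq_of_forall_finset_exists (fun _ : ℕ => True)
    (fun i j => i < j ∧ Disjoint (A i) (A j)) (by
      intro s _
      have hO : (⋂ i ∈ s, (A i)ᶜ) ∈ 𝓝 x := by
        rw [Filter.biInter_finset_mem]
        exact fun i _ => (hc i).isOpen_compl.mem_nhds (hx i)
      have h1 : ∀ᶠ n in atTop, ∀ i ∈ s, i < n := by
        rw [Filter.eventually_all_finset]
        exact fun i _ => eventually_gt_atTop i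
      obtain ⟨n, h1, h2⟩ := (h1.and (hl _ hO)).exists
      refine ⟨n, trivial, fun i hi => ⟨h1 i hi, Set.disjoint_left.2 fun y hy1 hy2 => ?_⟩⟩
      have := h2 hy2
      simp only [mem_iInter] at this
      exact this i hi hy1)
  refine ⟨g, fun m n h => (hg m n h).1, fun m n h => ?_⟩
  rcases lt_or_gt_of_ne h with h | h
  · exact (hg m n h).2
  · exact (hg n m h).2.symm

theorem closedEmb_of {M Q A Y0 : Type*} [TopologicalSpace M] [TopologicalSpace Q]
    [TopologicalSpace A] [TopologicalSpace Y0] [CompactSpace M] [T2Space Q]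
    {y : M → Q} (hy : Continuous y) (hi : Function.Injective y) {e : Y0 → Q} (he : IsEmbedding e)
    {j : A → M} (hj : IsEmbedding j) (hr : range j = y ⁻¹' (range e)) :
    ∃ a : A → Y0, IsClosedEmbedding a ∧ ∀ z, e (a z) = y (j z) := by
  have h : ∀ z, ∃ w, e w = y (j z) := by
    intro z
    have : j z ∈ y ⁻¹' (range e) := hr ▸ mem_range_self z
    exact this
  choose a ha using h
  have hea : e ∘ a = y ∘ j := funext ha
  have hyj : IsEmbedding (e ∘ a) := by
    rw [hea]; exact (hy.isClosedEmbedding hi).isEmbedding.comp hj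
  have hca : Continuous a := by
    rw [he.continuous_iff]; exact hyj.continuous
  refine ⟨a, ⟨IsEmbedding.of_comp hca he.continuous hyj, ?_⟩, ha⟩
  have : range a = e ⁻¹' (range y) := by
    ext w
    constructor
    · rintro ⟨z, rfl⟩; exact ⟨j z, (ha z).symm⟩
    · rintro ⟨m, hm⟩
      have : m ∈ range j := by rw [hr]; exact ⟨w, hm.symm⟩
      obtain ⟨z, rfl⟩ := this
      exact ⟨z, he.injective (by rw [ha, hm])⟩
  rw [this]
  exact (isCompact_range hy).isClosed.preimage he.continuous

/-! Hurewicz -/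

def Sep {X : Type*} [TopologicalSpace X] (B A : Set X) : Prop :=
  ∃ S : Set (Set X), S.Countable ∧ (∀ F ∈ S, IsClosed F ∧ Disjoint F B) ∧ A ⊆ ⋃₀ S

theorem Sep.mono {X : Type*} [TopologicalSpace X] {A A' B : Set X} (h : Sep B A) (hA : A' ⊆ A) :
    Sep B A' := by
  obtain ⟨S, h1, h2, h3⟩ := h
  exact ⟨S, h1, h2, hA.trans h3⟩

theorem Sep.iUnion {X ι : Type*} [TopologicalSpace X] [Countable ι] {A : ι → Set X} {B : Set X}
    (h : ∀ i, Sep B (A i)) : Sep B (⋃ i, A i) := by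
  choose S h1 h2 h3 using h
  refine ⟨⋃ i, S i, countable_iUnion h1, ?_, ?_⟩
  · intro F hF
    obtain ⟨i, hi⟩ := mem_iUnion.1 hF
    exact h2 i F hi
  · refine iUnion_subset fun i => (h3 i).trans (sUnion_subset_sUnion (subset_iUnion S i))

theorem hurewicz {X : Type*} [MetricSpace X] {f : (ℕ → ℕ) → X} (hf : Continuous f) {B : Set X}
    (hB : ∀ b, f b ∉ B) (hsep : ¬ Sep B (range f)) :
    ∃ h : NStar → X, Continuous h ∧ (∀ c c', h c = h c' → rr c = rr c') ∧
      (∀ b, h (inf b) ∈ range f) ∧ ∀ t, h (lim t) ∈ B := by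
  let T : List ℕ → Prop := fun s => ¬ Sep B (f '' CylB s)
  have hTp : ∀ {s t : List ℕ}, s <+: t → T t → T s := fun hst ht h =>
    ht (h.mono (image_mono (CylB_mono hst)))
  have hT0 : T [] := by
    intro h
    refine hsep (h.mono ?_)
    rintro _ ⟨b, rfl⟩
    exact ⟨b, fun i hi => by simp at hi, rfl⟩
  let R : Set (ℕ → ℕ) := {a | ∀ n, T (rs a n)}
  let Fs : List ℕ → Set X := fun s => closure (f '' (CylB s ∩ R))
  have hFanti : ∀ {s t : List ℕ}, s <+: t → Fs t ⊆ Fs s := fun hst =>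
    closure_mono (image_mono (inter_subset_inter_left _ (CylB_mono hst)))
  have hmeet : ∀ s, T s → ∃ x ∈ B, x ∈ Fs s := by
    intro s hs
    by_contra hcon
    push Not at hcon
    apply hs
    have h1 : Sep B (Fs s) := ⟨{Fs s}, countable_singleton _, by
      rintro F rfl
      exact ⟨isClosed_closure, Set.disjoint_left.2 fun x hx hxB => hcon x hxB hx⟩, by simp⟩
    have h2 : Sep B (⋃ u : {u : List ℕ // ¬ T u}, f '' CylB u.1) :=
      Sep.iUnion fun u => not_not.1 u.2
    have h3 : Sep B (⋃ i : Bool, bif i then Fs s else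
        (⋃ u : {u : List ℕ // ¬ T u}, f '' CylB u.1)) := by
      apply Sep.iUnion
      rintro (_ | _)
      · exact h2
      · exact h1
    refine h3.mono ?_
    rintro _ ⟨b, hb, rfl⟩
    by_cases hbR : b ∈ R
    · exact mem_iUnion.2 ⟨true, subset_closure ⟨b, ⟨hb, hbR⟩, rfl⟩⟩
    · have : ∃ n, ¬ T (rs b n) := not_forall.1 hbR
      obtain ⟨n, hn⟩ := this
      refine mem_iUnion.2 ⟨false, mem_iUnion.2 ⟨⟨rs b n, hn⟩, b, mem_CylB_rs b n, rfl⟩⟩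
  have step : ∀ s, T s → ∃ x ∈ B, x ∈ Fs s ∧ ∃ q : ℕ → List ℕ,
      (∀ j, s <+: q j ∧ s.length < (q j).length ∧ T (q j) ∧ x ∉ Fs (q j)) ∧
      (∀ i j, i ≠ j → Disjoint (Fs (q i)) (Fs (q j))) ∧
      ∀ O ∈ 𝓝 x, ∀ᶠ j in cofinite, Fs (q j) ⊆ O := by
    intro s hs
    obtain ⟨x, hxB, hx⟩ := hmeet s hs
    have h1 : ∀ n : ℕ, ∃ q : List ℕ, s <+: q ∧ s.length < q.length ∧ T q ∧ x ∉ Fs q ∧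
        Fs q ⊆ Metric.closedBall x (2 * (1 / ((n : ℝ) + 1))) := by
      intro n
      obtain ⟨_, ⟨a, ⟨has, haR⟩, rfl⟩, had⟩ :=
        Metric.mem_closure_iff.1 hx (1 / ((n : ℝ) + 1)) Nat.one_div_pos_of_nat
      have hr : 0 < dist x (f a) := dist_pos.2 fun h => hB a (h ▸ hxB)
      obtain ⟨l, hl⟩ := nhdsB (hf.continuousAt.preimage_mem_nhds
        (Metric.ball_mem_nhds (f a) (half_pos hr)))
      have hsub : Fs (rs a (max l (s.length + 1))) ⊆ Metric.closedBall (f a) (dist x (f a) / 2) := by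
        refine closure_minimal ?_ Metric.isClosed_closedBall
        rintro _ ⟨b, hb, rfl⟩
        exact Metric.ball_subset_closedBall (hl (CylB_mono (rs_mono a (le_max_left _ _)) hb.1))
      refine ⟨rs a (max l (s.length + 1)), prefix_rs_of has (by omega), by simp, haR _, ?_, ?_⟩
      · intro h
        have := hsub h
        rw [Metric.mem_closedBall] at this
        linarith
      · refine hsub.trans (Metric.closedBall_subset_closedBall' ?_)
        rw [dist_comm (f a) x]
        linarith
    choose q hq1 hq2 hq3 hq4 hq5 using h1
    have hlim : ∀ O ∈ 𝓝 x, ∀ᶠ n in atTop, Fs (q n) ⊆ O := by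
      intro O hO
      obtain ⟨ε, hε, hεO⟩ := Metric.nhds_basis_closedBall.mem_iff.1 hO
      have h3 : Tendsto (fun n : ℕ => 2 * (1 / ((n : ℝ) + 1))) atTop (𝓝 (2 * 0)) :=
        tendsto_one_div_add_atTop_nhds_zero_nat.const_mul 2
      rw [mul_zero] at h3
      filter_upwards [h3.eventually (gt_mem_nhds hε)] with n hn
      exact (hq5 n).trans ((Metric.closedBall_subset_closedBall hn.le).trans hεO)
    obtain ⟨g, hg, hgd⟩ := thin (fun n => isClosed_closure) hq4 hlim
    refine ⟨x, hxB, hx, q ∘ g, fun j => ⟨hq1 _, hq2 _, hq3 _, hq4 _⟩, hgd, fun O hO => ?_⟩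
    rw [Nat.cofinite_eq_atTop]
    exact hg.tendsto_atTop.eventually (hlim O hO)
  have : Nonempty X := ⟨f 0⟩
  choose! x hxB hxF q hq hqd hql using step
  let k : List ℕ → List ℕ := tr (fun u _ n => q u n) []
  have hks : ∀ t n, k (t ++ [n]) = q (k t) n := fun t n => tr_snoc _ _ t n
  have hkT : ∀ t, T (k t) := by
    intro t
    induction t using List.reverseRecOn with
    | nil => exact hT0
    | append_singleton t n ih => rw [hks]; exact (hq _ ih n).2.2.1
  have hgrow : Grow k := by
    intro t n
    rw [hks]
    exact ⟨(hq _ (hkT t) n).1, (hq _ (hkT t) n).2.1⟩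
  have hkR : ∀ b, kinf k b ∈ R := fun b n =>
    hTp (rs_prefix_of (hgrow.kinf_prefix b n) (hgrow.len b n)) (hkT _)
  have S : Scheme (fun t => Fs (k t)) (fun t => x (k t)) (fun t => x (k t))
      (fun b => f (kinf k b)) :=
    { w_mem := fun t => hxF _ (hkT t)
      x_mem := fun t => hxF _ (hkT t)
      z_mem := fun b n => subset_closure ⟨_, ⟨hgrow.kinf_prefix b n, hkR b⟩, rfl⟩
      anti := fun t n => hFanti (hgrow t n).1
      conv := fun t O hO => by
        simp only [hks]; exact hql _ (hkT t) O hO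
      br := fun b O hO => by
        obtain ⟨ε, hε, hεO⟩ := Metric.nhds_basis_closedBall.mem_iff.1 hO
        obtain ⟨n, hn⟩ := nhdsB (hf.continuousAt.preimage_mem_nhds
          (Metric.closedBall_mem_nhds (f (kinf k b)) hε))
        refine ⟨n, (closure_minimal ?_ Metric.isClosed_closedBall).trans hεO⟩
        rintro _ ⟨a, ha, rfl⟩
        exact hn (CylB_mono (rs_prefix_of (hgrow.kinf_prefix b n) (hgrow.len b n)) ha.1)
      disj := fun t m n hmn => by
        simp only [hks]; exact hqd _ (hkT t) m n hmn
      x_not := fun t n => by simp only [hks]; exact (hq _ (hkT t) n).2.2.2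
      w_not := fun t n => by simp only [hks]; exact (hq _ (hkT t) n).2.2.2 }
  exact ⟨_, S.continuous, fun c c' h => S.inj h, fun b => ⟨_, rfl⟩, fun t => hxB _ (hkT t)⟩

end BF

namespace BF
open Filter hiding lim
open NStar

theorem dense_pigeon {ι : Type*} {t : Set ι} (ht : t.Finite) (E : ι → Set (List ℕ)) :
    ∀ (D : Set (List ℕ)) (s : List ℕ), DenseAbove D s → (D ⊆ ⋃ i ∈ t, E i) →
      ∃ i ∈ t, ∃ s', s <+: s' ∧ DenseAbove (D ∩ E i) s' := by
  induction t, ht using Set.Finite.induction_on with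
  | empty =>
    intro D s hD hs
    obtain ⟨d, hd, -⟩ := hD s List.prefix_rfl
    simpa using hs hd
  | @insert a t _ _ ih =>
    intro D s hD hs
    by_cases h : DenseAbove (D ∩ E a) s
    · exact ⟨a, mem_insert _ _, s, List.prefix_rfl, h⟩
    · unfold DenseAbove at h
      push Not at h
      obtain ⟨s1, hs1, hno⟩ := h
      obtain ⟨i, hi, s', hs', hd⟩ := ih {d ∈ D | s1 <+: d} s1 (by
        intro u hu
        obtain ⟨d, hd, hud⟩ := hD u (hs1.trans hu)
        exact ⟨d, ⟨hd, hu.trans hud⟩, hud⟩) (by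
        rintro d ⟨hd, hsd⟩
        have h1 := hs hd
        rw [biUnion_insert] at h1
        rcases h1 with h1 | h1
        · exact absurd hsd (hno d ⟨hd, h1⟩)
        · exact h1)
      refine ⟨i, mem_insert_of_mem _ hi, s', hs1.trans hs', fun u hu => ?_⟩
      obtain ⟨d, hd, hud⟩ := hd u hu
      exact ⟨d, ⟨hd.1.1, hd.2⟩, hud⟩

def LL {Q : Type*} [TopologicalSpace Q] (η : List ℕ → Q) (s : List ℕ) (D : Set (List ℕ)) : Set Q :=
  closure (η '' {d ∈ D | s <+: d})

theorem LL_mono {Q : Type*} [TopologicalSpace Q] (η : List ℕ → Q) {s s' : List ℕ}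
    {D D' : Set (List ℕ)} (hs : s <+: s') (hD : D' ⊆ D) : LL η s' D' ⊆ LL η s D :=
  closure_mono (image_mono fun _ hd => ⟨hD hd.1, hs.trans hd.2⟩)

section
variable {Q : Type*} [MetricSpace Q] [CompactSpace Q] (η : List ℕ → Q)

theorem LL_shrink {s : List ℕ} {D : Set (List ℕ)} (hD : DenseAbove D s) {ε : ℝ} (hε : 0 < ε) :
    ∃ s' D', s <+: s' ∧ D' ⊆ D ∧ DenseAbove D' s' ∧ ∀ a ∈ LL η s' D', ∀ b ∈ LL η s' D',
      dist a b ≤ ε := by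
  obtain ⟨t, -, htf, ht⟩ := finite_cover_balls_of_compact (isCompact_univ (X := Q))
    (half_pos hε)
  obtain ⟨i, -, s', hs', hd⟩ := dense_pigeon htf (fun i => η ⁻¹' Metric.ball i (ε / 2)) D s hD
    (by
      intro d _
      have := ht (mem_univ (η d))
      simpa using this)
  have hsub : LL η s' (D ∩ η ⁻¹' Metric.ball i (ε / 2)) ⊆ Metric.closedBall i (ε / 2) := by
    refine closure_minimal ?_ Metric.isClosed_closedBall
    rintro _ ⟨d, hd, rfl⟩
    exact Metric.ball_subset_closedBall hd.1.2
  refine ⟨s', _, hs', inter_subset_left, hd, fun a ha b hb => ?_⟩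
  have h1 := hsub ha
  have h2 := hsub hb
  rw [Metric.mem_closedBall] at h1 h2
  have := dist_triangle_right a b i
  linarith

theorem LL_avoid (hη : ∀ y s, ∃ s', s <+: s' ∧ ∃ ε > 0, ∀ d, s' <+: d → ε ≤ dist (η d) y)
    (y : Q) (s : List ℕ) (D : Set (List ℕ)) : ∃ s', s <+: s' ∧ y ∉ LL η s' D := by
  obtain ⟨s', hs', ε, hε, h⟩ := hη y s
  refine ⟨s', hs', fun hy => ?_⟩
  have : LL η s' D ⊆ {z | ε ≤ dist z y} := by
    refine closure_minimal ?_ (isClosed_le continuous_const (continuous_id.dist continuous_const))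
    rintro _ ⟨d, hd, rfl⟩
    exact h d hd.2
  have h2 : ε ≤ dist y y := this hy
  rw [dist_self] at h2
  linarith

theorem LL_step (hη : ∀ y s, ∃ s', s <+: s' ∧ ∃ ε > 0, ∀ d, s' <+: d → ε ≤ dist (η d) y)
    {s : List ℕ} {D : Set (List ℕ)} (hD : DenseAbove D s) {ε : ℝ} (hε : 0 < ε) :
    ∃ x ∈ D, s <+: x ∧ ∃ y ∈ LL η s D, ∃ (q : ℕ → List ℕ) (E : ℕ → Set (List ℕ)) (m : ℕ → ℕ),
      Function.Injective m ∧ (∀ n, x ++ [m n] <+: q n ∧ E n ⊆ D ∧ DenseAbove (E n) (q n) ∧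
        y ∉ LL η (q n) (E n) ∧ η x ∉ LL η (q n) (E n) ∧
        ∀ a ∈ LL η (q n) (E n), ∀ b ∈ LL η (q n) (E n), dist a b ≤ ε) ∧
      (∀ i j, i ≠ j → Disjoint (LL η (q i) (E i)) (LL η (q j) (E j))) ∧
      ∀ O ∈ 𝓝 y, ∀ᶠ n in cofinite, LL η (q n) (E n) ⊆ O := by
  obtain ⟨x, hxD, hsx⟩ := hD s List.prefix_rfl
  have h1 : ∀ n : ℕ, ∃ s' D', x ++ [n] <+: s' ∧ D' ⊆ D ∧ DenseAbove D' s' ∧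
      ∀ a ∈ LL η s' D', ∀ b ∈ LL η s' D', dist a b ≤ min ε (1 / ((n : ℝ) + 1)) := fun n =>
    LL_shrink η (hD.mono (hsx.trans (List.prefix_append x [n])))
      (lt_min hε Nat.one_div_pos_of_nat)
  choose q0 E0 hq0 hE0 hd0 hm0 using h1
  have h2 : ∀ n, ∃ l, l ∈ LL η (q0 n) (E0 n) := by
    intro n
    obtain ⟨d, hd, hqd⟩ := hd0 n _ List.prefix_rfl
    exact ⟨η d, subset_closure ⟨d, ⟨hd, hqd⟩, rfl⟩⟩
  choose l hl using h2
  obtain ⟨y, φ, hφ, hlim⟩ := CompactSpace.tendsto_subseq l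
  have hsub0 : ∀ n, LL η (q0 n) (E0 n) ⊆ LL η s D := fun n =>
    LL_mono η (hsx.trans ((List.prefix_append x [n]).trans (hq0 n))) (hE0 n)
  have hy : y ∈ LL η s D :=
    isClosed_closure.mem_of_tendsto hlim (Eventually.of_forall fun i => hsub0 _ (hl _))
  have h3 : ∀ i, ∃ s', q0 (φ i) <+: s' ∧ y ∉ LL η s' (E0 (φ i)) ∧ η x ∉ LL η s' (E0 (φ i)) := by
    intro i
    obtain ⟨s1, h1, h2⟩ := LL_avoid η hη y (q0 (φ i)) (E0 (φ i))
    obtain ⟨s2, h3, h4⟩ := LL_avoid η hη (η x) s1 (E0 (φ i))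
    exact ⟨s2, h1.trans h3, fun h => h2 (LL_mono η h3 Subset.rfl h), h4⟩
  choose q1 hq1 hy1 hx1 using h3
  have hsub1 : ∀ i, LL η (q1 i) (E0 (φ i)) ⊆ LL η (q0 (φ i)) (E0 (φ i)) := fun i =>
    LL_mono η (hq1 i) Subset.rfl
  have hconv : ∀ O ∈ 𝓝 y, ∀ᶠ i in atTop, LL η (q1 i) (E0 (φ i)) ⊆ O := by
    intro O hO
    obtain ⟨δ, hδ, hδO⟩ := Metric.nhds_basis_ball.mem_iff.1 hO
    have e1 := (tendsto_one_div_add_atTop_nhds_zero_nat (𝕜 := ℝ)).comp hφ.tendsto_atTop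
    filter_upwards [e1.eventually (gt_mem_nhds (half_pos hδ)),
      hlim.eventually (Metric.ball_mem_nhds y (half_pos hδ))] with i hi1 hi2 a ha
    apply hδO
    have h5 := (hm0 _ a (hsub1 i ha) _ (hl _)).trans (min_le_right _ _)
    simp only [Function.comp] at hi1 hi2
    rw [Metric.mem_ball]
    have := dist_triangle a (l (φ i)) y
    linarith
  obtain ⟨g, hg, hgd⟩ := thin (fun n => isClosed_closure) hy1 hconv
  refine ⟨x, hxD, hsx, y, hy, q1 ∘ g, fun i => E0 (φ (g i)), φ ∘ g, hφ.injective.comp hg.injective,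
    fun n => ⟨(hq0 _).trans (hq1 _), hE0 _, (hd0 _).mono (hq1 _), hy1 _, hx1 _,
      fun a ha b hb => (hm0 _ a (hsub1 _ ha) b (hsub1 _ hb)).trans (min_le_left _ _)⟩, hgd,
    fun O hO => ?_⟩
  rw [Nat.cofinite_eq_atTop]
  exact hg.tendsto_atTop.eventually (hconv O hO)

theorem lemmaC (hη : ∀ y s, ∃ s', s <+: s' ∧ ∃ ε > 0, ∀ d, s' <+: d → ε ≤ dist (η d) y) :
    ∃ k, Copy k ∧ ∃ Y : NStar → Q, Continuous Y ∧ (∀ c c', Y c = Y c' → rr c = rr c') ∧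
      ∀ t, Y (fin t) = η (k t) := by
  let P := {p : List ℕ × Set (List ℕ) // DenseAbove p.2 p.1}
  have hstep := fun (p : P) (j : ℕ) => LL_step η hη p.2
    (Nat.one_div_pos_of_nat : 0 < 1 / ((j : ℝ) + 1))
  choose x hxD hsx y hy q E m hm hq hdis hconv using hstep
  let p0 : P := ⟨([], univ), fun t _ => ⟨t, trivial, List.prefix_rfl⟩⟩
  let p : List ℕ → P := tr (fun p j n => ⟨(q p j n, E p j n), (hq p j n).2.2.1⟩) p0
  have hp : ∀ t n, p (t ++ [n]) = ⟨(q (p t) t.length n, E (p t) t.length n),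
    (hq (p t) t.length n).2.2.1⟩ := fun t n => tr_snoc _ _ t n
  let F : List ℕ → Set Q := fun t => LL η (p t).1.1 (p t).1.2
  have hF : ∀ t n, F (t ++ [n]) = LL η (q (p t) t.length n) (E (p t) t.length n) := by
    intro t n; simp only [F, hp]
  let k : List ℕ → List ℕ := fun t => x (p t) t.length
  have hk : ∀ t n, k t ++ [m (p t) t.length n] <+: (p (t ++ [n])).1.1 := by
    intro t n; rw [hp]; exact (hq _ _ n).1
  have hcopy : Copy k := fun t => ⟨m (p t) t.length, hm _ _, fun n =>
    (hk t n).trans (hsx _ _)⟩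
  have hanti : ∀ t n, F (t ++ [n]) ⊆ F t := by
    intro t n
    rw [hF]
    refine LL_mono η ?_ (hq _ _ n).2.1
    exact (hsx _ _).trans ((List.prefix_append _ _).trans (hq _ _ n).1)
  have hw : ∀ t, η (k t) ∈ F t := fun t => subset_closure ⟨_, ⟨hxD _ _, hsx _ _⟩, rfl⟩
  have hz : ∀ b : ℕ → ℕ, ∃ z, ∀ n, z ∈ F (rs b n) := by
    intro b
    obtain ⟨z, hz⟩ := IsCompact.nonempty_iInter_of_sequence_nonempty_isCompact_isClosed
      (fun n => F (rs b n)) (fun n => by rw [rs_succ]; exact hanti _ _)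
      (fun n => ⟨_, hw _⟩) isClosed_closure.isCompact (fun n => isClosed_closure)
    exact ⟨z, mem_iInter.1 hz⟩
  choose z hz using hz
  have S : Scheme F (fun t => η (k t)) (fun t => y (p t) t.length) z :=
    { w_mem := hw
      x_mem := fun t => hy _ _
      z_mem := hz
      anti := hanti
      conv := fun t O hO => by
        simp only [hF]; exact hconv _ _ O hO
      br := fun b O hO => by
        obtain ⟨ε, hε, hεO⟩ := Metric.nhds_basis_closedBall.mem_iff.1 hO
        obtain ⟨n, hn⟩ := exists_nat_one_div_lt hε
        refine ⟨n + 1, fun a ha => hεO ?_⟩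
        have h1 := hz b (n+1)
        rw [rs_succ, hF] at ha h1
        have := (hq _ _ _).2.2.2.2.2 a ha _ h1
        rw [rs_len] at this
        exact this.trans hn.le
      disj := fun t m n hmn => by
        simp only [hF]; exact hdis _ _ m n hmn
      x_not := fun t n => by rw [hF]; exact (hq _ _ n).2.2.2.1
      w_not := fun t n => by rw [hF]; exact (hq _ _ n).2.2.2.2.1 }
  exact ⟨k, hcopy, _, S.continuous, fun c c' h => S.inj h, fun t => rfl⟩

end
end BF

namespace BF
open Filter hiding lim
open NStar

/-- points at which `A` is everywhere nonmeagre -/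
def NM (A : Set (ℕ → ℕ)) : Set (ℕ → ℕ) := {x | ∀ U, IsOpen U → x ∈ U → ¬ IsMeagre (A ∩ U)}

theorem isClosed_NM (A : Set (ℕ → ℕ)) : IsClosed (NM A) := by
  rw [← isOpen_compl_iff, isOpen_iff_mem_nhds]
  intro x hx
  have : ∃ U, IsOpen U ∧ x ∈ U ∧ IsMeagre (A ∩ U) := by
    by_contra h; push Not at h; exact hx h
  obtain ⟨U, hU, hxU, hm⟩ := this
  exact mem_of_superset (hU.mem_nhds hxU) fun y hy h => h U hU hy hm

theorem NM_sub_closure (A : Set (ℕ → ℕ)) : NM A ⊆ closure A := by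
  intro x hx
  rw [mem_closure_iff]
  intro U hU hxU
  by_contra h
  rw [not_nonempty_iff_eq_empty, inter_comm] at h
  exact hx U hU hxU (h ▸ IsMeagre.empty)

theorem diff_NM (A : Set (ℕ → ℕ)) : IsMeagre (A \ NM A) := by
  have h : A \ NM A ⊆ ⋃ u : {u : List ℕ // IsMeagre (A ∩ CylB u)}, A ∩ CylB u.1 := by
    rintro x ⟨hxA, hx⟩
    have : ∃ U, IsOpen U ∧ x ∈ U ∧ IsMeagre (A ∩ U) := by
      by_contra h; push Not at h; exact hx h
    obtain ⟨U, hU, hxU, hm⟩ := this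
    obtain ⟨n, hn⟩ := nhdsB (hU.mem_nhds hxU)
    exact mem_iUnion.2 ⟨⟨rs x n, hm.mono (inter_subset_inter_right _ hn)⟩, hxA, mem_CylB_rs x n⟩
  exact (isMeagre_iUnion fun u => u.2).mono h

theorem closed_diff_interior (E : Set (ℕ → ℕ)) (hE : IsClosed E) : IsMeagre (E \ interior E) := by
  rw [← hE.frontier_eq]
  refine IsNowhereDense.isMeagre ?_
  exact isClosed_frontier.isNowhereDense_iff.2 (interior_frontier hE)

theorem NM_iUnion (A : Set (ℕ → ℕ)) (B : ℕ → Set (ℕ → ℕ)) (hA : A ⊆ ⋃ n, B n) :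
    IsMeagre (NM A \ ⋃ n, NM (B n)) := by
  refine IsNowhereDense.isMeagre ?_
  unfold IsNowhereDense
  set N := NM A \ ⋃ n, NM (B n) with hN
  by_contra hne
  obtain ⟨x, hx⟩ := nonempty_iff_ne_empty.2 hne
  set W := interior (closure N) with hW
  have hNA : closure N ⊆ NM A := closure_minimal sdiff_subset (isClosed_NM A)
  have h1 := hNA (interior_subset hx) W isOpen_interior hx
  apply h1
  have h2 : ∀ n, IsMeagre (B n ∩ W) := by
    intro n
    have hemp : interior (NM (B n)) ∩ W = ∅ := by
      by_contra hne2
      obtain ⟨y, hy1, hy2⟩ := nonempty_iff_ne_empty.2 hne2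
      obtain ⟨w, hw, hwN⟩ := mem_closure_iff.1 (interior_subset hy2) _ isOpen_interior hy1
      exact hwN.2 (mem_iUnion.2 ⟨n, interior_subset hw⟩)
    refine ((diff_NM (B n)).union (closed_diff_interior _ (isClosed_NM (B n)))).mono ?_
    rintro y ⟨hyB, hyW⟩
    by_cases hyN : y ∈ NM (B n)
    · exact Or.inr ⟨hyN, fun h => (hemp ▸ (⟨h, hyW⟩ : y ∈ interior (NM (B n)) ∩ W) : y ∈ (∅ : Set _))⟩
    · exact Or.inl ⟨hyB, hyN⟩
  refine (isMeagre_iUnion h2).mono ?_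
  rw [← iUnion_inter]
  exact inter_subset_inter_left _ hA

theorem analytic_BP {S : Set (ℕ → ℕ)} (hS : MeasureTheory.AnalyticSet S) :
    (∃ s, S ∪ (CylB s)ᶜ ∈ residual (ℕ → ℕ)) ∨ Sᶜ ∈ residual (ℕ → ℕ) := by
  rw [MeasureTheory.AnalyticSet] at hS
  rcases hS with rfl | ⟨f, hf, rfl⟩
  · right; simp
  let E : List ℕ → Set (ℕ → ℕ) := fun u => NM (f '' CylB u)
  have hM : IsMeagre (⋃ u : List ℕ, E u \ ⋃ n, E (u ++ [n])) := by
    refine isMeagre_iUnion fun u => NM_iUnion _ _ ?_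
    rintro _ ⟨b, hb, rfl⟩
    refine mem_iUnion.2 ⟨b u.length, b, ?_, rfl⟩
    have := mem_CylB_rs b (u.length + 1)
    rwa [rs_succ, prefixFun_iff.1 hb] at this
  have h1 : E [] ⊆ range f ∪ ⋃ u : List ℕ, E u \ ⋃ n, E (u ++ [n]) := by
    intro x hx
    by_cases hxM : x ∈ ⋃ u : List ℕ, E u \ ⋃ n, E (u ++ [n])
    · exact Or.inr hxM
    · left
      obtain ⟨b, hb⟩ := exists_branch (fun u => x ∈ E u) hx (by
        intro u hu
        by_contra h
        push Not at h
        exact hxM (mem_iUnion.2 ⟨u, hu, by simpa using h⟩))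
      refine ⟨b, ?_⟩
      by_contra hne
      have hO : ({x}ᶜ : Set (ℕ → ℕ)) ∈ 𝓝 (f b) := isOpen_compl_singleton.mem_nhds hne
      obtain ⟨V, hV, hVc, hVO⟩ := exists_mem_nhds_isClosed_subset hO
      obtain ⟨n, hn⟩ := nhdsB (hf.continuousAt.preimage_mem_nhds hV)
      have h2 := closure_minimal (image_subset_iff.2 hn) hVc (NM_sub_closure _ (hb n))
      exact hVO h2 rfl
  have h2 : IsMeagre (range f \ E []) := by
    refine (diff_NM (f '' CylB [])).mono ?_
    rintro _ ⟨⟨b, rfl⟩, hb⟩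
    exact ⟨⟨b, fun i hi => by simp at hi, rfl⟩, hb⟩
  have hcl : IsClosed (E []) := isClosed_NM _
  by_cases hinterior : (interior (E [])).Nonempty
  · left
    obtain ⟨x, hx⟩ := hinterior
    obtain ⟨n, hn⟩ := nhdsB (isOpen_interior.mem_nhds hx)
    refine ⟨rs x n, mem_of_superset hM fun y hy => ?_⟩
    by_cases hyC : y ∈ CylB (rs x n)
    · rcases h1 (interior_subset (hn hyC)) with h | h
      · exact Or.inl h
      · exact absurd h hy
    · exact Or.inr hyC
  · right
    rw [not_nonempty_iff_eq_empty] at hinterior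
    have h3 := closed_diff_interior _ hcl
    rw [hinterior, sdiff_empty] at h3
    refine (h2.union h3).mono ?_
    intro y hy
    by_cases h : y ∈ E []
    · exact Or.inr h
    · exact Or.inl ⟨hy, h⟩

theorem dich_analytic {S : Set (ℕ → ℕ)} (hS : MeasureTheory.AnalyticSet S) :
    ∃ k, Copy k ∧ ((∀ b, kinf k b ∈ S) ∨ ∀ b, kinf k b ∉ S) := by
  rcases analytic_BP hS with ⟨s, hs⟩ | h
  · obtain ⟨k, h1, h2, h3⟩ := subcopy (D := univ) (s := s)
      (fun t _ => ⟨t, trivial, List.prefix_rfl⟩) hs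
    refine ⟨k, h1, Or.inl fun b => ?_⟩
    rcases h3 b with h | h
    · exact h
    · exact absurd (CylB_mono (h2 (rs b 0)).2 (h1.grow.kinf_prefix b 0)) h
  · obtain ⟨k, h1, h2, h3⟩ := subcopy (D := univ) (s := [])
      (fun t _ => ⟨t, trivial, List.prefix_rfl⟩) h
    exact ⟨k, h1, Or.inr h3⟩

/-- Borel functions on Baire space are continuous on a copy -/
theorem borel_copy {Z : Type*} [TopologicalSpace Z] [SecondCountableTopology Z]
    {θ : (ℕ → ℕ) → Z} (hθ : ∀ V, IsOpen V → @MeasurableSet _ (borel (ℕ → ℕ)) (θ ⁻¹' V)) :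
    ∃ k, Copy k ∧ Continuous (θ ∘ kinf k) := by
  have h1 : ∀ V : countableBasis Z, ∃ U : Set (ℕ → ℕ), IsOpen U ∧
      {x | x ∈ θ ⁻¹' V.1 ↔ x ∈ U} ∈ residual (ℕ → ℕ) := by
    intro V
    have := (hθ V.1 (isOpen_of_mem_countableBasis V.2))
    obtain ⟨U, hU, h⟩ := @MeasurableSet.residualEq_isOpen _ _ _ (borel _) (@BorelSpace.mk _ _ (borel _) rfl) this
    exact ⟨U, hU, h.mem_iff⟩
  choose U hU hr using h1
  have : Countable (countableBasis Z) := (countable_countableBasis Z).to_subtype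
  have hG : (⋂ V, {x | x ∈ θ ⁻¹' V.1 ↔ x ∈ U V}) ∈ residual (ℕ → ℕ) :=
    (countable_iInter_mem).2 hr
  obtain ⟨k, h1, -, h3⟩ := subcopy (D := univ) (s := [])
      (fun t _ => ⟨t, trivial, List.prefix_rfl⟩) hG
  refine ⟨k, h1, ?_⟩
  rw [(isBasis_countableBasis Z).continuous_iff]
  intro V hV
  have : (θ ∘ kinf k) ⁻¹' V = kinf k ⁻¹' (U ⟨V, hV⟩) := by
    ext b
    exact mem_iInter.1 (h3 b) ⟨V, hV⟩
  rw [this]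
  exact (hU _).preimage h1.continuous_kinf

end BF

namespace BF
open Filter hiding lim
open NStar

/-- `θ` factors as a closed embedding after `f` -/
def FRes {A Y0 : Type*} [TopologicalSpace A] [TopologicalSpace Y0] (θ : (ℕ → ℕ) → Y0)
    (f : (ℕ → ℕ) → A) : Prop :=
  ∃ a : A → Y0, IsClosedEmbedding a ∧ ∀ b, θ b = a (f b)

def GRes {B Y0 : Type*} [TopologicalSpace B] [TopologicalSpace Y0] (θ : List ℕ → Y0)
    (g : NLim → B) : Prop :=
  ∃ a : B → Y0, IsClosedEmbedding a ∧ ∀ t, θ t = a (g (limPt t))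

theorem rr_hat (k : List ℕ → List ℕ) (c : NStar) : rr (hat k c) = hat k (rr c) := by
  cases c <;> rfl

theorem rr_not_fin {c : NStar} (h : ¬ c.IsFin) : rr c = c := by
  cases c with
  | fin t => exact absurd ⟨t, rfl⟩ h
  | lim t => rfl
  | inf b => rfl

def hatN (k : List ℕ → List ℕ) (c : NNStar) : NNStar :=
  ⟨hat k c.1, by
    obtain ⟨c, hc⟩ := c
    cases c with
    | fin t => exact absurd ⟨t, rfl⟩ hc
    | lim t => rintro ⟨s, h⟩; exact NStar.noConfusion h
    | inf b => rintro ⟨s, h⟩; exact NStar.noConfusion h⟩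

theorem Copy.continuous_hatN {k : List ℕ → List ℕ} (h : Copy k) : Continuous (hatN k) :=
  Continuous.subtype_mk (h.continuous_hat.comp continuous_subtype_val) _

theorem Copy.hatN_inj {k : List ℕ → List ℕ} (h : Copy k) : Function.Injective (hatN k) :=
  fun _ _ e => Subtype.ext (h.hat_inj (congrArg Subtype.val e))

theorem range_infPt : range infPt = {c : NNStar | c.1.IsInf} := by
  ext ⟨c, hc⟩
  constructor
  · rintro ⟨b, hb⟩; exact ⟨b, (congrArg Subtype.val hb).symm⟩
  · rintro ⟨b, hb⟩; exact ⟨b, Subtype.ext hb.symm⟩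

theorem Copy.closed_kinf {k : List ℕ → List ℕ} (h : Copy k) : IsClosedEmbedding (kinf k) := by
  obtain ⟨a, ha, hb⟩ := closedEmb_of h.continuous_hatN h.hatN_inj isEmbedding_infPt
    isEmbedding_infPt (by
      rw [range_infPt]
      ext ⟨c, hc⟩
      cases c with
      | fin t => exact absurd ⟨t, rfl⟩ hc
      | lim t =>
        constructor
        · rintro ⟨b, hb⟩; exact NStar.noConfusion hb
        · rintro ⟨b, hb⟩; exact NStar.noConfusion hb
      | inf b => exact ⟨fun _ => ⟨_, rfl⟩, fun _ => ⟨_, rfl⟩⟩)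
  have : a = kinf k := by
    funext z
    exact isEmbedding_infPt.injective (hb z)
  rwa [← this]

section
variable {Y0 : Type*} [TopologicalSpace Y0] {θ : (ℕ → ℕ) → Y0} {k : List ℕ → List ℕ}

theorem FRes.f1 [T2Space Y0] (h : ∃ y, ∀ b, θ b = y) : FRes θ f1 := by
  obtain ⟨y, hy⟩ := h
  exact ⟨fun _ => y, Continuous.isClosedEmbedding continuous_const fun _ _ _ => rfl, hy⟩

theorem FRes.f2 (h : FRes θ f2) (hk : Copy k) : FRes (θ ∘ kinf k) f2 := by
  obtain ⟨a, ha, hb⟩ := h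
  exact ⟨a ∘ kinf k, ha.comp hk.closed_kinf, fun b => hb _⟩

theorem FRes.f3 (h : FRes θ f3) (hk : Copy k) : FRes (θ ∘ kinf k) f3 := by
  obtain ⟨a, ha, hb⟩ := h
  exact ⟨a ∘ hatN k, ha.comp (hk.continuous_hatN.isClosedEmbedding hk.hatN_inj), fun b => hb _⟩
end

theorem FRes.of {M Q A Y0 : Type*} [TopologicalSpace M] [TopologicalSpace Q]
    [TopologicalSpace A] [TopologicalSpace Y0] [CompactSpace M] [T2Space Q]
    {y : M → Q} (hy : Continuous y) (hi : Function.Injective y) {e : Y0 → Q} (he : IsEmbedding e)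
    {j : A → M} (hj : IsEmbedding j) (hr : range j = y ⁻¹' (range e)) {θ : (ℕ → ℕ) → Y0}
    {f : (ℕ → ℕ) → A} (h : ∀ b, y (j (f b)) = e (θ b)) : FRes θ f := by
  obtain ⟨a, ha, hb⟩ := closedEmb_of hy hi he hj hr
  exact ⟨a, ha, fun b => he.injective (by rw [hb, h])⟩

theorem GRes.of {M Q A Y0 : Type*} [TopologicalSpace M] [TopologicalSpace Q]
    [TopologicalSpace A] [TopologicalSpace Y0] [CompactSpace M] [T2Space Q]
    {y : M → Q} (hy : Continuous y) (hi : Function.Injective y) {e : Y0 → Q} (he : IsEmbedding e)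
    {j : A → M} (hj : IsEmbedding j) (hr : range j = y ⁻¹' (range e)) {θ : List ℕ → Y0}
    {g : NLim → A} (h : ∀ t, y (j (g (limPt t))) = e (θ t)) : GRes θ g := by
  obtain ⟨a, ha, hb⟩ := closedEmb_of hy hi he hj hr
  exact ⟨a, ha, fun b => he.injective (by rw [hb, h])⟩

theorem tendsto_fin_rs (b : ℕ → ℕ) : Tendsto (fun n => fin (rs b n)) atTop (𝓝 (inf b)) := by
  intro O hO
  obtain ⟨n, hn⟩ := nhds_inf hO
  rw [mem_map]
  filter_upwards [eventually_ge_atTop n] with m hm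
  exact hn (rs_mono b hm)

theorem Copy.tendsto_ext0 {k : List ℕ → List ℕ} (hk : Copy k) (b : ℕ → ℕ) :
    Tendsto (fun n => ext0 (k (rs b n))) atTop (𝓝 (kinf k b)) := by
  intro O hO
  obtain ⟨n, hn⟩ := nhdsB hO
  rw [mem_map]
  filter_upwards [eventually_ge_atTop n] with m hm
  refine hn (CylB_mono ?_ (ext0_mem (k (rs b m))))
  exact rs_prefix_of (hk.grow.kinf_prefix b m) (hm.trans (hk.grow.len b m))

theorem inj_NN {Q : Type*} {Y : NStar → Q} (h : ∀ c c', Y c = Y c' → rr c = rr c') :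
    Function.Injective (fun c : NNStar => Y c.1) := by
  intro c c' e
  have := h _ _ e
  rw [rr_not_fin c.2, rr_not_fin c'.2] at this
  exact Subtype.ext this

theorem lemmaF {Y0 Q : Type*} [TopologicalSpace Y0] [SecondCountableTopology Y0] [MetricSpace Q]
    [CompactSpace Q] {e : Y0 → Q} (he : IsEmbedding e) {θ : (ℕ → ℕ) → Y0}
    (hθ : ∀ V, IsOpen V → @MeasurableSet _ (borel (ℕ → ℕ)) (θ ⁻¹' V)) :
    ∃ k, Copy k ∧ ((∃ y, ∀ b, (θ ∘ kinf k) b = y) ∨ FRes (θ ∘ kinf k) f2 ∨ FRes (θ ∘ kinf k) f3) := by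
  obtain ⟨k0, hk0, hc0⟩ := borel_copy hθ
  set θ1 := θ ∘ kinf k0 with hθ1
  by_cases hconst : ∃ s, ∀ b ∈ CylB s, ∀ c ∈ CylB s, θ1 b = θ1 c
  · obtain ⟨s, hs⟩ := hconst
    obtain ⟨k, h1, h2, -⟩ := subcopy (D := univ) (s := s)
      (fun t _ => ⟨t, trivial, List.prefix_rfl⟩) univ_mem
    refine ⟨k0 ∘ k, hk0.comp h1, Or.inl ⟨θ1 (ext0 s), fun b => ?_⟩⟩
    · simp only [Function.comp_apply]
      rw [hk0.kinf_comp h1]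
      exact hs _ (CylB_mono (h2 (rs b 0)).2 (h1.grow.kinf_prefix b 0)) _ (ext0_mem s)
  · push Not at hconst
    have hec : Continuous (fun b => e (θ1 b)) := he.continuous.comp hc0
    obtain ⟨k, hk, Y, hYc, hYi, hYk⟩ := lemmaC (fun d => e (θ1 (ext0 d))) (by
      intro y s
      have : ∃ a ∈ CylB s, e (θ1 a) ≠ y := by
        by_contra hcon
        push Not at hcon
        obtain ⟨b, hb, c, hc, hne⟩ := hconst s
        exact hne (he.injective ((hcon b hb).trans (hcon c hc).symm))
      obtain ⟨a, ha, hne⟩ := this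
      have hpos : 0 < dist (e (θ1 a)) y / 2 := half_pos (dist_pos.2 hne)
      obtain ⟨n, hn⟩ := nhdsB (hec.continuousAt.preimage_mem_nhds
        (Metric.ball_mem_nhds (e (θ1 a)) hpos))
      refine ⟨rs a (max n s.length), prefix_rs_of ha (le_max_right _ _), _, hpos, fun d hd => ?_⟩
      have h1 : ext0 d ∈ CylB (rs a n) :=
        CylB_mono ((rs_mono a (le_max_left _ _)).trans hd) (ext0_mem d)
      have h2 : dist (e (θ1 (ext0 d))) (e (θ1 a)) < dist (e (θ1 a)) y / 2 := hn h1
      have := dist_triangle_left (e (θ1 a)) y (e (θ1 (ext0 d)))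
      linarith)
    have hYinf : ∀ b, Y (inf b) = e (θ1 (kinf k b)) := by
      intro b
      have t1 := (hYc.tendsto (inf b)).comp (tendsto_fin_rs b)
      have t2 := (hec.tendsto (kinf k b)).comp (hk.tendsto_ext0 b)
      refine tendsto_nhds_unique t1 (t2.congr fun n => ?_)
      simp [hYk]
    obtain ⟨k', hk', hd⟩ := dich_list {t | Y (lim t) ∈ range e}
    refine ⟨k0 ∘ (k ∘ k'), hk0.comp (hk.comp hk'), ?_⟩
    have hkk : ∀ b, (θ ∘ kinf (k0 ∘ (k ∘ k'))) b = θ1 (kinf k (kinf k' b)) := by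
      intro b
      simp only [Function.comp_apply, hθ1]
      rw [hk0.kinf_comp (hk.comp hk') b, hk.kinf_comp hk' b]
    have hy : Continuous (fun c : NNStar => Y (hatN k' c).1) :=
      hYc.comp (continuous_subtype_val.comp hk'.continuous_hatN)
    have hi : Function.Injective (fun c : NNStar => Y (hatN k' c).1) :=
      (inj_NN hYi).comp hk'.hatN_inj
    have hinf : ∀ b, Y (hatN k' (infPt b)).1 = e ((θ ∘ kinf (k0 ∘ (k ∘ k'))) b) := by
      intro b
      rw [hkk]
      exact hYinf _
    right
    rcases hd with hd | hd
    · right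
      refine FRes.of hy hi he IsEmbedding.id ?_ hinf
      rw [range_id, eq_comm, eq_univ_iff_forall]
      rintro ⟨c, hc⟩
      cases c with
      | fin t => exact absurd ⟨t, rfl⟩ hc
      | lim t => exact hd t
      | inf b => exact ⟨_, (hinf b).symm⟩
    · left
      refine FRes.of hy hi he isEmbedding_infPt ?_ hinf
      rw [range_infPt]
      ext ⟨c, hc⟩
      cases c with
      | fin t => exact absurd ⟨t, rfl⟩ hc
      | lim t =>
        constructor
        · rintro ⟨b, hb⟩; exact NStar.noConfusion hb
        · intro h; exact absurd h (hd t)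
      | inf b => exact ⟨fun _ => ⟨_, (hinf b).symm⟩, fun _ => ⟨_, rfl⟩⟩

end BF

namespace BF
open Filter hiding lim
open NStar

instance : DiscreteTopology NFin := by
  rw [discreteTopology_iff_isOpen_singleton]
  rintro ⟨c, t, rfl⟩
  have : ({⟨fin t, t, rfl⟩} : Set NFin) = Subtype.val ⁻¹' ({fin t} : Set NStar) := by
    ext x; simp [Subtype.ext_iff]
  rw [this]
  exact (isOpen_fin t).preimage continuous_subtype_val

def nb : NStar → List ℕ
  | fin t => t
  | lim t => t
  | inf _ => []

theorem fin_nb (c : NFin) : c.1 = fin (nb c.1) := by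
  obtain ⟨c, t, rfl⟩ := c; rfl

/-- first alternative: `η` clusters at a point above a node -/
theorem lemmaG1 {Y0 Q : Type*} [TopologicalSpace Y0] [MetricSpace Q] {e : Y0 → Q}
    (he : IsEmbedding e) {θ : List ℕ → Y0} (y : Q) (s : List ℕ)
    (hs : ∀ s', s <+: s' → ∀ ε > 0, ∃ d, s' <+: d ∧ dist (e (θ d)) y < ε) :
    ∃ k, Copy k ∧ ((∃ w, ∀ t, (θ ∘ k) t = w) ∨ GRes (θ ∘ k) g4 ∨ GRes (θ ∘ k) g5) := by
  by_cases hfib : DenseAbove {d | e (θ d) = y} s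
  · obtain ⟨k, h1, h2, -⟩ := subcopy hfib univ_mem
    refine ⟨k, h1, Or.inl ⟨θ (k []), fun t => he.injective ?_⟩⟩
    exact (h2 t).1.trans (h2 []).1.symm
  unfold DenseAbove at hfib
  push Not at hfib
  obtain ⟨s', hss', hno⟩ := hfib
  have hpos : ∀ d, s' <+: d → 0 < dist (e (θ d)) y := fun d hd =>
    dist_pos.2 fun h => hno d h hd
  obtain ⟨u, hu⟩ := exists_surjective_nat (List ℕ)
  have hstep : ∀ (n : ℕ) (p : {d // s' <+: d}), ∃ d : {d // s' <+: d},
      dist (e (θ d.1)) y < min (1 / ((n : ℝ) + 1)) (dist (e (θ p.1)) y) ∧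
      (s' <+: u n → u n <+: d.1) := by
    intro n p
    have hmin : 0 < min (1 / ((n : ℝ) + 1)) (dist (e (θ p.1)) y) :=
      lt_min Nat.one_div_pos_of_nat (hpos _ p.2)
    by_cases hun : s' <+: u n
    · obtain ⟨d, h1, h2⟩ := hs (u n) (hss'.trans hun) _ hmin
      exact ⟨⟨d, hun.trans h1⟩, h2, fun _ => h1⟩
    · obtain ⟨d, h1, h2⟩ := hs s' hss' _ hmin
      exact ⟨⟨d, h1⟩, h2, fun h => absurd h hun⟩
  choose st hst1 hst2 using hstep
  let d : ℕ → {d // s' <+: d} := fun n => Nat.rec ⟨s', List.prefix_rfl⟩ st n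
  have hd : ∀ n, d (n+1) = st n (d n) := fun n => rfl
  have hanti : StrictAnti (fun n => dist (e (θ (d n).1)) y) := by
    refine strictAnti_nat_of_succ_lt fun n => ?_
    rw [hd]
    exact (hst1 n (d n)).trans_le (min_le_right _ _)
  have hdense : DenseAbove (range fun n => (d (n+1)).1) s' := by
    intro t ht
    obtain ⟨n, rfl⟩ := hu t
    exact ⟨_, ⟨n, rfl⟩, by simp only [hd]; exact hst2 n _ ht⟩
  obtain ⟨k, hk, hkD, -⟩ := subcopy hdense univ_mem
  choose N hN using fun t => (hkD t).1
  simp only at hN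
  have hNinj : Function.Injective N := fun a b hab => hk.inj (by rw [← hN a, ← hN b, hab])
  have hmet : Function.Injective (fun t => e (θ (k t))) := by
    intro a b hab
    apply hNinj
    have h1 : dist (e (θ (k a))) y = dist (e (θ (k b))) y := by simp only at hab; rw [hab]
    rw [← hN a, ← hN b] at h1
    have : N a + 1 = N b + 1 := hanti.injective h1
    omega
  let M : OnePoint NFin → Q := fun c => OnePoint.elim c y (fun c : NFin => e (θ (k (nb c.1))))
  have hM1 : ∀ c : NFin, M c = e (θ (k (nb c.1))) := fun c => rfl
  have hM0 : M OnePoint.infty = y := rfl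
  have hnbinj : Function.Injective (fun c : NFin => nb c.1) := by
    intro a b hab
    apply Subtype.ext
    rw [fin_nb a, fin_nb b]
    simp only at hab
    rw [hab]
  have hlim : Tendsto (fun n => e (θ (d (n+1)).1)) atTop (𝓝 y) := by
    rw [tendsto_iff_dist_tendsto_zero]
    refine squeeze_zero (fun _ => dist_nonneg) (fun n => ?_)
      (tendsto_one_div_add_atTop_nhds_zero_nat (𝕜 := ℝ))
    rw [hd]
    exact ((hst1 n (d n)).trans_le (min_le_left _ _)).le
  have hMc : Continuous M := by
    rw [OnePoint.continuous_iff_from_discrete]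
    rw [← Nat.cofinite_eq_atTop] at hlim
    refine (hlim.comp (hNinj.comp hnbinj).tendsto_cofinite).congr fun c => ?_
    simp only [Function.comp]
    rw [hN, hM1]
  have hne : ∀ c : NFin, M c ≠ y := fun c h => hno (k (nb c.1)) h (hkD _).2
  have hMi : Function.Injective M := by
    intro a b
    induction a using OnePoint.rec with
    | infty =>
      induction b using OnePoint.rec with
      | infty => intro _; rfl
      | coe b => intro h; exact absurd h.symm (hne b)
    | coe a =>
      induction b using OnePoint.rec with
      | infty => intro h; exact absurd h (hne a)
      | coe b => intro h; rw [hnbinj (hmet h)]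
  refine ⟨k, hk, Or.inr ?_⟩
  by_cases hy : y ∈ range e
  · right
    refine GRes.of hMc hMi he IsEmbedding.id ?_ fun t => rfl
    rw [range_id, eq_comm, eq_univ_iff_forall]
    intro c
    induction c using OnePoint.rec with
    | infty => exact hy
    | coe c => exact ⟨_, rfl⟩
  · left
    refine GRes.of (j := ((↑) : NFin → OnePoint NFin)) hMc hMi he
      OnePoint.isOpenEmbedding_coe.isEmbedding ?_ fun t => rfl
    ext c
    induction c using OnePoint.rec with
    | infty => exact ⟨fun ⟨x, hx⟩ => absurd hx (OnePoint.coe_ne_infty x), fun h => absurd h hy⟩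
    | coe c => exact ⟨fun _ => ⟨_, rfl⟩, fun _ => ⟨c, rfl⟩⟩

def Tr {Q : Type*} [TopologicalSpace Q] (η : List ℕ → Q) (k : List ℕ → List ℕ) (Y : NStar → Q) :
    Prop :=
  Copy k ∧ Continuous Y ∧ (∀ c c', Y c = Y c' → rr c = rr c') ∧ ∀ t, Y (fin t) = η (k t)

theorem Tr.comp {Q : Type*} [TopologicalSpace Q] {η : List ℕ → Q} {k k' : List ℕ → List ℕ}
    {Y : NStar → Q} (h : Tr η k Y) (hk' : Copy k') : Tr η (k ∘ k') (Y ∘ hat k') := by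
  obtain ⟨h1, h2, h3, h4⟩ := h
  refine ⟨h1.comp hk', h2.comp hk'.continuous_hat, fun c c' hc => ?_, fun t => h4 _⟩
  have := h3 _ _ hc
  rw [rr_hat, rr_hat] at this
  exact hk'.hat_inj this

theorem continuous_toNN : Continuous NLim.toNN :=
  Continuous.subtype_mk continuous_subtype_val _

theorem isEmbedding_toNN : IsEmbedding NLim.toNN :=
  IsEmbedding.of_comp continuous_toNN continuous_subtype_val IsEmbedding.subtypeVal

theorem range_toNN : range NLim.toNN = {c : NNStar | c.1.IsLim} := by
  ext ⟨c, hc⟩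
  constructor
  · rintro ⟨⟨_, t, rfl⟩, hb⟩; exact ⟨t, (congrArg Subtype.val hb).symm⟩
  · intro hb; exact ⟨⟨c, hb⟩, rfl⟩

theorem lemmaG2 {Y0 Q : Type*} [TopologicalSpace Y0] [MetricSpace Q] [CompactSpace Q] {e : Y0 → Q}
    (he : IsEmbedding e) (hR : MeasureTheory.AnalyticSet (range e)) {θ : List ℕ → Y0}
    (hη : ∀ y s, ∃ s', s <+: s' ∧ ∃ ε > 0, ∀ d, s' <+: d → ε ≤ dist (e (θ d)) y) :
    ∃ k, Copy k ∧ (GRes (θ ∘ k) g2 ∨ GRes (θ ∘ k) g3 ∨ GRes (θ ∘ k) g4 ∨ GRes (θ ∘ k) g6 ∨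
      GRes (θ ∘ k) g7 ∨ GRes (θ ∘ k) g8) := by
  obtain ⟨k0, hk0, Y0', hY⟩ := lemmaC (fun d => e (θ d)) hη
  have T0 : Tr (fun d => e (θ d)) k0 Y0' := ⟨hk0, hY⟩
  obtain ⟨k1, hk1, hd1⟩ := dich_list {t | Y0' (fin t) = Y0' (lim t)}
  have T1 := T0.comp hk1
  set Y1 := Y0' ∘ hat k1 with hY1
  have hd1' : (∀ t, Y1 (fin t) = Y1 (lim t)) ∨ ∀ t, Y1 (fin t) ≠ Y1 (lim t) := hd1
  clear hd1
  obtain ⟨k2, hk2, hd2⟩ := dich_list {t | Y1 (lim t) ∈ range e}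
  have T2 := T1.comp hk2
  set Y2 := Y1 ∘ hat k2 with hY2
  have hd2' : (∀ t, Y2 (lim t) ∈ range e) ∨ ∀ t, Y2 (lim t) ∉ range e := hd2
  have hd1'' : (∀ t, Y2 (fin t) = Y2 (lim t)) ∨ ∀ t, Y2 (fin t) ≠ Y2 (lim t) := by
    rcases hd1' with h | h
    · exact Or.inl fun t => h _
    · exact Or.inr fun t => h _
  clear hd2 hd1'
  have hS : MeasureTheory.AnalyticSet {b : ℕ → ℕ | Y2 (inf b) ∈ range e} :=
    hR.preimage (T2.2.1.comp continuous_inf)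
  obtain ⟨k3, hk3, hd3⟩ := dich_analytic hS
  have T3 := T2.comp hk3
  set Y := Y2 ∘ hat k3 with hYdef
  have hS : (∀ b, Y (inf b) ∈ range e) ∨ ∀ b, Y (inf b) ∉ range e := hd3
  have hE : (∀ t, Y (fin t) = Y (lim t)) ∨ ∀ t, Y (fin t) ≠ Y (lim t) := by
    rcases hd1'' with h | h
    · exact Or.inl fun t => h _
    · exact Or.inr fun t => h _
  have hL : (∀ t, Y (lim t) ∈ range e) ∨ ∀ t, Y (lim t) ∉ range e := by
    rcases hd2' with h | h
    · exact Or.inl fun t => h _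
    · exact Or.inr fun t => h _
  clear hd3 hd1'' hd2'
  generalize ((k0 ∘ k1) ∘ k2) ∘ k3 = k at T3
  clear_value Y
  obtain ⟨hk, hc, hi, hf⟩ := T3
  refine ⟨k, hk, ?_⟩
  have hfin : ∀ t, Y (fin t) ∈ range e := fun t => ⟨_, (hf t).symm⟩
  rcases hE with hE | hE
  · have hc' : Continuous (fun c : NNStar => Y c.1) := hc.comp continuous_subtype_val
    have hlim : ∀ t, Y (lim t) = e (θ (k t)) := fun t => by rw [← hE, hf]
    rcases hS with hS | hS
    · right; left
      refine GRes.of hc' (inj_NN hi) he IsEmbedding.id ?_ hlim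
      rw [range_id, eq_comm, eq_univ_iff_forall]
      rintro ⟨c, hc⟩
      cases c with
      | fin t => exact absurd ⟨t, rfl⟩ hc
      | lim t => exact ⟨_, (hlim t).symm⟩
      | inf b => exact hS b
    · left
      refine GRes.of hc' (inj_NN hi) he isEmbedding_toNN ?_ hlim
      rw [range_toNN]
      ext ⟨c, hc⟩
      cases c with
      | fin t => exact absurd ⟨t, rfl⟩ hc
      | lim t => exact ⟨fun _ => ⟨_, (hlim t).symm⟩, fun _ => ⟨_, rfl⟩⟩
      | inf b => exact ⟨fun ⟨t, ht⟩ => NStar.noConfusion ht, fun h => absurd h (hS b)⟩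
  · have hinj : Function.Injective Y := by
      intro c c' h
      have := hi c c' h
      cases c <;> cases c' <;> simp_all [rr]
      · exact hE _ h.symm
    right; right
    rcases hL with hL | hL
    · rcases hS with hS | hS
      · right; right; right
        refine GRes.of hc hinj he IsEmbedding.id ?_ hf
        rw [range_id, eq_comm, eq_univ_iff_forall]
        intro c
        cases c with
        | fin t => exact hfin t
        | lim t => exact hL t
        | inf b => exact hS b
      · right; left
        refine GRes.of (j := (Subtype.val : NFinLim → NStar)) hc hinj he IsEmbedding.subtypeVal ?_ hf
        refine Subtype.range_val_subtype.trans ?_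
        ext c
        cases c with
        | fin t => exact ⟨fun _ => hfin t, fun _ ⟨b, hb⟩ => NStar.noConfusion hb⟩
        | lim t => exact ⟨fun _ => hL t, fun _ ⟨b, hb⟩ => NStar.noConfusion hb⟩
        | inf b => exact ⟨fun h => absurd ⟨b, rfl⟩ h, fun h => absurd h (hS b)⟩
    · rcases hS with hS | hS
      · right; right; left
        refine GRes.of (j := (Subtype.val : NFinInf → NStar)) hc hinj he IsEmbedding.subtypeVal ?_ hf
        refine Subtype.range_val_subtype.trans ?_
        ext c
        cases c with
        | fin t => exact ⟨fun _ => hfin t, fun _ ⟨b, hb⟩ => NStar.noConfusion hb⟩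
        | inf b => exact ⟨fun _ => hS b, fun _ ⟨b, hb⟩ => NStar.noConfusion hb⟩
        | lim t => exact ⟨fun h => absurd ⟨t, rfl⟩ h, fun h => absurd h (hL t)⟩
      · left
        refine GRes.of (j := (Subtype.val : NFin → NStar)) hc hinj he IsEmbedding.subtypeVal ?_ hf
        refine Subtype.range_val_subtype.trans ?_
        ext c
        cases c with
        | fin t => exact ⟨fun _ => hfin t, fun _ => ⟨t, rfl⟩⟩
        | inf b => exact ⟨fun ⟨t, ht⟩ => NStar.noConfusion ht, fun h => absurd h (hS b)⟩
        | lim t => exact ⟨fun ⟨t, ht⟩ => NStar.noConfusion ht, fun h => absurd h (hL t)⟩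

theorem lemmaG {Y0 Q : Type*} [TopologicalSpace Y0] [MetricSpace Q] [CompactSpace Q] {e : Y0 → Q}
    (he : IsEmbedding e) (hR : MeasureTheory.AnalyticSet (range e)) (θ : List ℕ → Y0) :
    ∃ k, Copy k ∧ ((∃ w, ∀ t, (θ ∘ k) t = w) ∨ GRes (θ ∘ k) g2 ∨ GRes (θ ∘ k) g3 ∨
      GRes (θ ∘ k) g4 ∨ GRes (θ ∘ k) g5 ∨ GRes (θ ∘ k) g6 ∨
      GRes (θ ∘ k) g7 ∨ GRes (θ ∘ k) g8) := by
  by_cases hη : ∀ y s, ∃ s', s <+: s' ∧ ∃ ε > 0, ∀ d, s' <+: d → ε ≤ dist (e (θ d)) y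
  · obtain ⟨k, hk, h⟩ := lemmaG2 he hR hη
    exact ⟨k, hk, by tauto⟩
  · push Not at hη
    obtain ⟨y, s, hs⟩ := hη
    obtain ⟨k, hk, h⟩ := lemmaG1 he y s hs
    exact ⟨k, hk, by tauto⟩

end BF

namespace BF
open Filter hiding lim
open NStar

theorem GRes.g1 {Y0 : Type*} [TopologicalSpace Y0] [T2Space Y0] {θ : List ℕ → Y0}
    (h : ∃ y, ∀ b, θ b = y) : GRes θ g1 := by
  obtain ⟨y, hy⟩ := h
  exact ⟨fun _ => y, Continuous.isClosedEmbedding continuous_const fun _ _ _ => rfl, hy⟩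

theorem assemble {X Y A B : Type*} [TopologicalSpace X] [T2Space X] [TopologicalSpace Y]
    [TopologicalSpace A] [TopologicalSpace B] {φ : X → Y} {C D : Set Y} (hC : IsClosed C)
    (hD : IsClosed D) (hCD : Disjoint C D) {h : NNStar → X} (hc : Continuous h)
    (hi : Function.Injective h) {θ : (ℕ → ℕ) → C} {θ' : List ℕ → D}
    (h1 : ∀ b, φ (h (infPt b)) = θ b) (h2 : ∀ t, φ (h (limPt t).toNN) = θ' t)
    {f : (ℕ → ℕ) → A} {g : NLim → B} (hf : FRes θ f) (hg : GRes θ' g) :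
    ClosedContinuousEmbedding (combine2 f g) φ := by
  obtain ⟨a, ha, haf⟩ := hf
  obtain ⟨b, hb, hbg⟩ := hg
  let S : A ⊕ B → Y := Sum.elim (fun x => (a x : Y)) (fun x => (b x : Y))
  have ha' : IsClosedEmbedding (fun x => (a x : Y)) := hC.isClosedEmbedding_subtypeVal.comp ha
  have hb' : IsClosedEmbedding (fun x => (b x : Y)) := hD.isClosedEmbedding_subtypeVal.comp hb
  have hSc : Continuous S := ha'.continuous.sumElim hb'.continuous
  have hSi : Function.Injective S := by
    refine ha'.injective.sumElim hb'.injective fun x y hxy => ?_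
    exact Set.disjoint_left.1 hCD (a x).2 (hxy ▸ (b y).2)
  have hScl : IsClosedMap S := ha'.isClosedMap.sumElim hb'.isClosedMap
  have hcomm : ∀ c, φ (h c) = S (combine2 f g c) := by
    rintro ⟨c, hc⟩
    cases c with
    | fin t => exact absurd ⟨t, rfl⟩ hc
    | inf x => exact (h1 x).trans (congrArg Subtype.val (haf x))
    | lim t => exact (h2 t).trans (congrArg Subtype.val (hbg t))
  have hmaps : ∀ x ∈ closure (range (combine2 f g)), S x ∈ closure (range φ) := by
    intro x hx
    refine map_mem_closure hSc hx ?_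
    rintro _ ⟨c, rfl⟩
    exact ⟨h c, hcomm c⟩
  refine ⟨h, fun x => ⟨S x.1, hmaps _ x.2⟩, hc, hi, hc.isClosedMap,
    Continuous.subtype_mk (hSc.comp continuous_subtype_val) _, ?_, ?_, hcomm⟩
  · intro x y hxy
    exact Subtype.ext (hSi (congrArg Subtype.val hxy))
  · intro K hK
    have h3 : IsClosed (S '' (Subtype.val '' K)) :=
      hScl _ (isClosed_closure.isClosedEmbedding_subtypeVal.isClosedMap _ hK)
    have h4 := h3.preimage (continuous_subtype_val (p := fun y => y ∈ closure (range φ)))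
    convert h4 using 1
    ext ⟨y, hy⟩
    constructor
    · rintro ⟨x, hx, hxy⟩
      exact ⟨x.1, ⟨x, hx, rfl⟩, congrArg Subtype.val hxy⟩
    · rintro ⟨_, ⟨x, hx, rfl⟩, hxy⟩
      exact ⟨x, hx, Subtype.ext hxy⟩

theorem analytic_sep {Y : Type*} [MetricSpace Y] (hY : IsAnalytic Y) :
    SecondCountableTopology Y := by
  obtain ⟨C, hC, f, hf, hs⟩ := hY
  have : SeparableSpace Y := hs.denseRange.separableSpace hf
  exact UniformSpace.secondCountable_of_separable Y

theorem analytic_of_borel {X : Type*} [TopologicalSpace X] (hX : IsAnalytic X) {S : Set X}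
    (hS : @MeasurableSet X (borel X) S) : MeasureTheory.AnalyticSet S := by
  obtain ⟨C, hC, f, hf, hs⟩ := hX
  have : PolishSpace C := hC.polishSpace
  borelize X
  have h1 : MeasurableSet (f ⁻¹' S) := hf.measurable hS
  have h2 := h1.analyticSet.image_of_continuous hf
  rwa [image_preimage_eq _ hs] at h2

theorem not_sep_of {X Y : Type*} [MetricSpace X] [MetricSpace Y] {φ : X → Y}
    (h2 : ¬ BaireClassOneFun φ) : ∃ C D : Set Y, IsClosed C ∧ IsClosed D ∧ Disjoint C D ∧
      ¬ Sep (φ ⁻¹' D) (φ ⁻¹' C) := by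
  unfold BaireClassOneFun at h2
  push Not at h2
  obtain ⟨V, hV, hF⟩ := h2
  have hD : IsClosed Vᶜ := hV.isClosed_compl
  have hne : (Vᶜ).Nonempty := by
    by_contra hemp
    rw [not_nonempty_iff_eq_empty, compl_empty_iff] at hemp
    exact hF (fun _ => univ) (fun _ => isClosed_univ) (by rw [hemp]; simp [iUnion_const])
  let C : ℕ → Set Y := fun n => {y | 1 / ((n : ℝ) + 1) ≤ Metric.infDist y Vᶜ}
  have hC : ∀ n, IsClosed (C n) := fun n =>
    isClosed_le continuous_const (Metric.continuous_infDist_pt _)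
  have hCD : ∀ n, Disjoint (C n) Vᶜ := by
    intro n
    rw [Set.disjoint_left]
    intro y hy hyV
    have h3 : 1 / ((n : ℝ) + 1) ≤ Metric.infDist y Vᶜ := hy
    rw [Metric.infDist_zero_of_mem hyV] at h3
    exact absurd h3 (not_le.2 Nat.one_div_pos_of_nat)
  have hVC : φ ⁻¹' V ⊆ ⋃ n, φ ⁻¹' (C n) := by
    intro x hx
    have : 0 < Metric.infDist (φ x) Vᶜ := (hD.notMem_iff_infDist_pos hne).1 (by simpa using hx)
    obtain ⟨n, hn⟩ := exists_nat_one_div_lt this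
    exact mem_iUnion.2 ⟨n, hn.le⟩
  by_contra hcon
  push Not at hcon
  have hs : Sep (φ ⁻¹' Vᶜ) (φ ⁻¹' V) :=
    (Sep.iUnion fun n => hcon (C n) Vᶜ (hC n) hD (hCD n)).mono hVC
  obtain ⟨S, hSc, hS, hSV⟩ := hs
  obtain ⟨F, hFr⟩ := (hSc.insert ∅).exists_eq_range (insert_nonempty _ _)
  have hFS : ∀ n, F n = ∅ ∨ F n ∈ S := by
    intro n
    have : F n ∈ insert ∅ S := hFr ▸ mem_range_self n
    exact this
  refine hF F (fun n => ?_) (Subset.antisymm ?_ ?_)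
  · rcases hFS n with h | h
    · rw [h]; exact isClosed_empty
    · exact (hS _ h).1
  · intro x hx
    obtain ⟨K, hK, hxK⟩ := hSV hx
    have : K ∈ range F := hFr ▸ mem_insert_of_mem _ hK
    obtain ⟨n, rfl⟩ := this
    exact mem_iUnion.2 ⟨n, hxK⟩
  · refine iUnion_subset fun n x hx => ?_
    rcases hFS n with h | h
    · rw [h] at hx; exact absurd hx (notMem_empty x)
    · by_contra hxV
      exact Set.disjoint_left.1 (hS _ h).2 hx hxV

theorem core {X Y : Type*} [MetricSpace X] [MetricSpace Y] (hX : IsAnalytic X)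
    (hY : IsAnalytic Y) (φ : X → Y) (h1 : BorelFun φ) (h2 : ¬ BaireClassOneFun φ) :
    ∃ (C D : Set Y) (θ : (ℕ → ℕ) → C) (θ' : List ℕ → D) (h : NNStar → X),
      IsClosed C ∧ IsClosed D ∧ Disjoint C D ∧ Continuous h ∧ Function.Injective h ∧
      (∀ b, φ (h (infPt b)) = θ b) ∧ (∀ t, φ (h (limPt t).toNN) = θ' t) ∧
      ((∃ y, ∀ b, θ b = y) ∨ FRes θ f2 ∨ FRes θ f3) ∧
      ((∃ y, ∀ t, θ' t = y) ∨ GRes θ' g2 ∨ GRes θ' g3 ∨ GRes θ' g4 ∨ GRes θ' g5 ∨ GRes θ' g6 ∨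
        GRes θ' g7 ∨ GRes θ' g8) := by
  obtain ⟨C, D, hC, hD, hCD, hsep⟩ := not_sep_of h2
  have hscY : SecondCountableTopology Y := analytic_sep hY
  have hCb : @MeasurableSet X (borel X) (φ ⁻¹' C) := by
    have := (h1 Cᶜ hC.isOpen_compl).compl
    rwa [← preimage_compl, compl_compl] at this
  have hCa := analytic_of_borel hX hCb
  have hDa : MeasureTheory.AnalyticSet D := analytic_of_borel hY (by
    borelize Y
    exact hD.measurableSet)
  rw [MeasureTheory.AnalyticSet] at hCa
  rcases hCa with hemp | ⟨f, hf, hfr⟩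
  · exact absurd ⟨∅, countable_empty, by simp, by simp [hemp]⟩ hsep
  have hfB : ∀ b, f b ∉ φ ⁻¹' D := by
    intro b hb
    have : f b ∈ φ ⁻¹' C := hfr ▸ mem_range_self b
    exact Set.disjoint_left.1 hCD this hb
  obtain ⟨h, hc, hi, hinf, hlim⟩ := hurewicz hf hfB (by rw [hfr]; exact hsep)
  rw [hfr] at hinf
  obtain ⟨e, he⟩ := Metric.PiNatEmbed.exists_embedding_to_hilbert_cube (X := Y)
  letI := TopologicalSpace.metrizableSpaceMetric (ℕ → unitInterval)
  have heC : IsEmbedding (fun c : C => e c) := he.comp IsEmbedding.subtypeVal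
  have heD : IsEmbedding (fun c : D => e c) := he.comp IsEmbedding.subtypeVal
  have heR : MeasureTheory.AnalyticSet (range fun c : D => e c) := by
    have h3 := hDa.image_of_continuous he.continuous
    have h4 : (range fun c : D => e c) = e '' D := by
      rw [image_eq_range]
    rwa [h4]
  obtain ⟨k1, hk1, hF⟩ := lemmaF heC (θ := fun b => (⟨φ (h (inf b)), hinf b⟩ : C)) (by
    intro V hV
    obtain ⟨W, hW, rfl⟩ := isOpen_induced_iff.1 hV
    have h3 := h1 W hW
    borelize X
    have h4 : Measurable (fun b => h (inf b)) := (hc.comp continuous_inf).measurable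
    have h5 := h4 h3
    rw [← BorelSpace.measurable_eq (α := ℕ → ℕ)]
    exact h5)
  obtain ⟨k2, hk2, hG⟩ := lemmaG heD heR (fun t => (⟨φ (h (lim (k1 t))), hlim _⟩ : D))
  refine ⟨C, D, ((fun b => (⟨φ (h (inf b)), hinf b⟩ : C)) ∘ kinf k1) ∘ kinf k2, _,
    fun c => h (hatN (k1 ∘ k2) c).1, hC, hD, hCD,
    hc.comp (continuous_subtype_val.comp (hk1.comp hk2).continuous_hatN),
    (inj_NN hi).comp (hk1.comp hk2).hatN_inj, ?_, ?_, ?_, hG⟩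
  · intro b
    change φ (h (inf (kinf (k1 ∘ k2) b))) = φ (h (inf (kinf k1 (kinf k2 b))))
    rw [hk1.kinf_comp hk2]
  · intro t
    rfl
  · rcases hF with ⟨y, hy⟩ | hF | hF
    · exact Or.inl ⟨y, fun b => hy _⟩
    · exact Or.inr (Or.inl (hF.f2 hk2))
    · exact Or.inr (Or.inr (hF.f3 hk2))

end BF

/-- a twenty-four-element basis for Borel functions that are not
Baire class one. -/
theorem stmt_18 {X Y : Type*} [MetricSpace X] [MetricSpace Y] (hX : IsAnalytic X)
    (hY : IsAnalytic Y) (φ : X → Y) (h1 : BorelFun φ) (h2 : ¬ BaireClassOneFun φ) :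
    ClosedContinuousEmbedding (combine2 f1 g1) φ ∨
    ClosedContinuousEmbedding (combine2 f1 g2) φ ∨
    ClosedContinuousEmbedding (combine2 f1 g3) φ ∨
    ClosedContinuousEmbedding (combine2 f1 g4) φ ∨
    ClosedContinuousEmbedding (combine2 f1 g5) φ ∨
    ClosedContinuousEmbedding (combine2 f1 g6) φ ∨
    ClosedContinuousEmbedding (combine2 f1 g7) φ ∨
    ClosedContinuousEmbedding (combine2 f1 g8) φ ∨
    ClosedContinuousEmbedding (combine2 f2 g1) φ ∨
    ClosedContinuousEmbedding (combine2 f2 g2) φ ∨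
    ClosedContinuousEmbedding (combine2 f2 g3) φ ∨
    ClosedContinuousEmbedding (combine2 f2 g4) φ ∨
    ClosedContinuousEmbedding (combine2 f2 g5) φ ∨
    ClosedContinuousEmbedding (combine2 f2 g6) φ ∨
    ClosedContinuousEmbedding (combine2 f2 g7) φ ∨
    ClosedContinuousEmbedding (combine2 f2 g8) φ ∨
    ClosedContinuousEmbedding (combine2 f3 g1) φ ∨
    ClosedContinuousEmbedding (combine2 f3 g2) φ ∨
    ClosedContinuousEmbedding (combine2 f3 g3) φ ∨
    ClosedContinuousEmbedding (combine2 f3 g4) φ ∨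
    ClosedContinuousEmbedding (combine2 f3 g5) φ ∨
    ClosedContinuousEmbedding (combine2 f3 g6) φ ∨
    ClosedContinuousEmbedding (combine2 f3 g7) φ ∨
    ClosedContinuousEmbedding (combine2 f3 g8) φ := by
  obtain ⟨C, D, θ, θ', h, hC, hD, hCD, hc, hi, e1, e2, hF, hG⟩ := BF.core hX hY φ h1 h2
  rcases hF with hF | hF | hF <;> rcases hG with hG | hG | hG | hG | hG | hG | hG | hG
  · exact Or.inl (BF.assemble hC hD hCD hc hi e1 e2 (BF.FRes.f1 hF) (BF.GRes.g1 hG))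
  · iterate 1 apply Or.inr
    exact Or.inl (BF.assemble hC hD hCD hc hi e1 e2 (BF.FRes.f1 hF) hG)
  · iterate 2 apply Or.inr
    exact Or.inl (BF.assemble hC hD hCD hc hi e1 e2 (BF.FRes.f1 hF) hG)
  · iterate 3 apply Or.inr
    exact Or.inl (BF.assemble hC hD hCD hc hi e1 e2 (BF.FRes.f1 hF) hG)
  · iterate 4 apply Or.inr
    exact Or.inl (BF.assemble hC hD hCD hc hi e1 e2 (BF.FRes.f1 hF) hG)
  · iterate 5 apply Or.inr
    exact Or.inl (BF.assemble hC hD hCD hc hi e1 e2 (BF.FRes.f1 hF) hG)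
  · iterate 6 apply Or.inr
    exact Or.inl (BF.assemble hC hD hCD hc hi e1 e2 (BF.FRes.f1 hF) hG)
  · iterate 7 apply Or.inr
    exact Or.inl (BF.assemble hC hD hCD hc hi e1 e2 (BF.FRes.f1 hF) hG)
  · iterate 8 apply Or.inr
    exact Or.inl (BF.assemble hC hD hCD hc hi e1 e2 hF (BF.GRes.g1 hG))
  · iterate 9 apply Or.inr
    exact Or.inl (BF.assemble hC hD hCD hc hi e1 e2 hF hG)
  · iterate 10 apply Or.inr
    exact Or.inl (BF.assemble hC hD hCD hc hi e1 e2 hF hG)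
  · iterate 11 apply Or.inr
    exact Or.inl (BF.assemble hC hD hCD hc hi e1 e2 hF hG)
  · iterate 12 apply Or.inr
    exact Or.inl (BF.assemble hC hD hCD hc hi e1 e2 hF hG)
  · iterate 13 apply Or.inr
    exact Or.inl (BF.assemble hC hD hCD hc hi e1 e2 hF hG)
  · iterate 14 apply Or.inr
    exact Or.inl (BF.assemble hC hD hCD hc hi e1 e2 hF hG)
  · iterate 15 apply Or.inr
    exact Or.inl (BF.assemble hC hD hCD hc hi e1 e2 hF hG)
  · iterate 16 apply Or.inr
    exact Or.inl (BF.assemble hC hD hCD hc hi e1 e2 hF (BF.GRes.g1 hG))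
  · iterate 17 apply Or.inr
    exact Or.inl (BF.assemble hC hD hCD hc hi e1 e2 hF hG)
  · iterate 18 apply Or.inr
    exact Or.inl (BF.assemble hC hD hCD hc hi e1 e2 hF hG)
  · iterate 19 apply Or.inr
    exact Or.inl (BF.assemble hC hD hCD hc hi e1 e2 hF hG)
  · iterate 20 apply Or.inr
    exact Or.inl (BF.assemble hC hD hCD hc hi e1 e2 hF hG)
  · iterate 21 apply Or.inr
    exact Or.inl (BF.assemble hC hD hCD hc hi e1 e2 hF hG)
  · iterate 22 apply Or.inr
    exact Or.inl (BF.assemble hC hD hCD hc hi e1 e2 hF hG)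
  · iterate 23 apply Or.inr
    exact BF.assemble hC hD hCD hc hi e1 e2 hF hG
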